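/- arXiv:0707.0939 — 2 statements merged into one kernel-verified Lean document; each statement's English description precedes it below -/
import Mathlib

section
/- An almost quaternion-Hermitian manifold M of dimension 4n ≥ 8 is QKT (i.e. its intrinsic torsion lies in (K+E)H) if and only if there exists a metric connection ∇^QKT = ∇ + (1/2)T that is quaternionic and whose (0,3)-torsion T(X,Y,Z) = g(X,T(Y,Z)) is a skew-symmetric three-form lying in (K+E)H, i.e. in the +3-eigenspace of 𝓛 = Σ_{A=I,J,K}(A_{(12)}+A_{(13)}+A_{(23)}). When M is QKT, ∇^QKT is the unique Sp(n)Sp(1)-connection on M with skew-symmetric torsion, the intrinsic torsion is given by ⟨Y, ξ_X Z⟩ = (−(3/8)T + (1/8)Σ_A A_{(23)}T − (1/4n)Σ_A A t ⊗ ω_A)(X,Y,Z) with t = IΛ_I T, and T = −(1/6) d*Ω − (1/(12(n−1))) Σ_{A=I,J,K} Aθ^{d*Ω} ∧ ω_A. -/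
/-!  Synthetic (Koszul-style) model of an almost quaternion-Hermitian `4n`-manifold.

`C` plays the role of the commutative ℝ-algebra of smooth functions and `V` that of
the `C`-module of vector fields, equipped with a directional derivative `D`, a Lie
bracket, a Riemannian metric `g` together with its Levi-Civita connection `nab`
(characterised by being torsion-free and metric), a local adapted basis `I, J, K`
of anticommuting almost complex structures with `K = I J`, each compatible with the
metric, and a (local) orthonormal frame.  -/

noncomputable section

open scoped BigOperators

structure AQH (n : ℕ) (C : Type*) (V : Type*) [CommRing C] [Algebra ℝ C]
    [AddCommGroup V] [Module C V] where
  /-- derivative of a function along a vector field -/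
  D : V → C → C
  D_add : ∀ X f g, D X (f + g) = D X f + D X g
  D_mul : ∀ X f g, D X (f * g) = f * D X g + g * D X f
  D_const : ∀ X (r : ℝ), D X (algebraMap ℝ C r) = 0
  D_addX : ∀ X Y f, D (X + Y) f = D X f + D Y f
  D_smulX : ∀ (f : C) (X : V) (h : C), D (f • X) h = f * D X h
  /-- the Lie bracket of vector fields -/
  bracket : V → V → V
  bracket_skew : ∀ X Y, bracket X Y = -bracket Y X
  bracket_add : ∀ X Y Z, bracket X (Y + Z) = bracket X Y + bracket X Z
  bracket_smul : ∀ X (f : C) Y, bracket X (f • Y) = f • bracket X Y + (D X f) • Y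
  bracket_jacobi : ∀ X Y Z,
    bracket X (bracket Y Z) + bracket Y (bracket Z X) + bracket Z (bracket X Y) = 0
  D_bracket : ∀ X Y f, D (bracket X Y) f = D X (D Y f) - D Y (D X f)
  /-- the Riemannian metric -/
  g : V → V → C
  g_symm : ∀ X Y, g X Y = g Y X
  g_add : ∀ X Y Z, g (X + Y) Z = g X Z + g Y Z
  g_smul : ∀ (f : C) X Y, g (f • X) Y = f * g X Y
  /-- the Levi-Civita connection -/
  nab : V → V → V
  nab_addX : ∀ X Y Z, nab (X + Y) Z = nab X Z + nab Y Z
  nab_smulX : ∀ (f : C) X Y, nab (f • X) Y = f • nab X Y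
  nab_add : ∀ X Y Z, nab X (Y + Z) = nab X Y + nab X Z
  nab_leibniz : ∀ X (f : C) Y, nab X (f • Y) = f • nab X Y + (D X f) • Y
  torsion_free : ∀ X Y, nab X Y - nab Y X = bracket X Y
  nab_metric : ∀ X Y Z, D X (g Y Z) = g (nab X Y) Z + g Y (nab X Z)
  /-- the (local) adapted basis of almost complex structures -/
  I : V → V
  J : V → V
  K : V → V
  I_lin : ∀ (f : C) X Y, I (f • X + Y) = f • I X + I Y
  J_lin : ∀ (f : C) X Y, J (f • X + Y) = f • J X + J Y
  K_lin : ∀ (f : C) X Y, K (f • X + Y) = f • K X + K Y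
  I_sq : ∀ X, I (I X) = -X
  J_sq : ∀ X, J (J X) = -X
  K_def : ∀ X, K X = I (J X)
  anticomm : ∀ X, I (J X) = -J (I X)
  I_metric : ∀ X Y, g (I X) (I Y) = g X Y
  J_metric : ∀ X Y, g (J X) (J Y) = g X Y
  /-- a (local) orthonormal frame -/
  frame : Fin (4 * n) → V
  frame_orthonormal : ∀ i j, g (frame i) (frame j) = if i = j then 1 else 0
  frame_span : ∀ X, X = ∑ i, g X (frame i) • frame i

namespace AQH

section ops

variable {C V : Type*} [CommRing C]

/-- the operator `A_(1)` on covariant 3-tensors -/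
def op1 (A : V → V) (ψ : V → V → V → C) : V → V → V → C := fun X Y Z => -ψ (A X) Y Z

/-- the operator `A_(2)` on covariant 3-tensors -/
def op2 (A : V → V) (ψ : V → V → V → C) : V → V → V → C := fun X Y Z => -ψ X (A Y) Z

/-- the operator `A_(3)` on covariant 3-tensors -/
def op3 (A : V → V) (ψ : V → V → V → C) : V → V → V → C := fun X Y Z => -ψ X Y (A Z)

/-- the operator `A_(12) = A_(1) A_(2)` on covariant 3-tensors -/
def op12 (A : V → V) (ψ : V → V → V → C) : V → V → V → C := fun X Y Z => ψ (A X) (A Y) Z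

/-- the operator `A_(13) = A_(1) A_(3)` on covariant 3-tensors -/
def op13 (A : V → V) (ψ : V → V → V → C) : V → V → V → C := fun X Y Z => ψ (A X) Y (A Z)

/-- the operator `A_(23) = A_(2) A_(3)` on covariant 3-tensors -/
def op23 (A : V → V) (ψ : V → V → V → C) : V → V → V → C := fun X Y Z => ψ X (A Y) (A Z)

/-- the operator `𝓛_A = A_(12) + A_(13) + A_(23)` on three-forms -/
def calL (A : V → V) (ψ : V → V → V → C) : V → V → V → C :=
  fun X Y Z => op12 A ψ X Y Z + op13 A ψ X Y Z + op23 A ψ X Y Z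

/-- the action `(A ν)(X) = -ν (A X)` of `A` on a one-form -/
def act1 (A : V → V) (ν : V → C) : V → C := fun X => -ν (A X)

/-- the action `(A ψ)(X,Y,Z) = -ψ(AX,AY,AZ)` of `A` on a three-form -/
def act3 (A : V → V) (ψ : V → V → V → C) : V → V → V → C :=
  fun X Y Z => -ψ (A X) (A Y) (A Z)

/-- wedge product of two one-forms -/
def wedge11 (α β : V → C) : V → V → C := fun X Y => α X * β Y - α Y * β X

/-- wedge product of a one-form and a two-form -/
def wedge12 (ν : V → C) (ω : V → V → C) : V → V → V → C :=
  fun X Y Z => ν X * ω Y Z - ν Y * ω X Z + ν Z * ω X Y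

/-- wedge product of two two-forms -/
def wedge22 (α β : V → V → C) : V → V → V → V → C := fun X Y Z W =>
  α X Y * β Z W - α X Z * β Y W + α X W * β Y Z
    + α Z W * β X Y - α Y W * β X Z + α Y Z * β X W

/-- a (0,3)-tensor is an alternating three-form -/
def IsAlt3 (T : V → V → V → C) : Prop :=
  (∀ X Y Z, T Y X Z = -T X Y Z) ∧ (∀ X Y Z, T X Z Y = -T X Y Z)

variable [AddCommGroup V] [Module C V]

/-- `C`-linearity (tensoriality) of a three-form in its first argument -/
def Lin3 (T : V → V → V → C) : Prop :=
  ∀ (f : C) X X' Y Z, T (f • X + X') Y Z = f * T X Y Z + T X' Y Z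

/-- `C`-linearity (tensoriality) of a one-form -/
def Lin1 (ν : V → C) : Prop := ∀ (f : C) X X', ν (f • X + X') = f * ν X + ν X'

end ops

section derived

variable {n : ℕ} {C V : Type*} [CommRing C] [Algebra ℝ C] [AddCommGroup V] [Module C V]
  [Module ℝ V] [IsScalarTower ℝ C V]

variable (M : AQH n C V)

/-- the Kähler form `ω_A(X,Y) = g(X, A Y)` -/
def omega (A : V → V) : V → V → C := fun X Y => M.g X (A Y)

/-- `(∇_X A) Y` -/
def nabA (A : V → V) : V → V → V := fun X Y => M.nab X (A Y) - A (M.nab X Y)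

/-- covariant derivative of a 2-form: `(∇_X ψ)(Y,Z)` -/
def nab2 (ψ : V → V → C) : V → V → V → C :=
  fun X Y Z => M.D X (ψ Y Z) - ψ (M.nab X Y) Z - ψ Y (M.nab X Z)

/-- covariant derivative of a 4-form -/
def nab4 (ψ : V → V → V → V → C) : V → V → V → V → V → C :=
  fun X Y Z W U => M.D X (ψ Y Z W U) - ψ (M.nab X Y) Z W U - ψ Y (M.nab X Z) W U
    - ψ Y Z (M.nab X W) U - ψ Y Z W (M.nab X U)

/-- exterior derivative of a one-form -/
def d1 (ν : V → C) : V → V → C :=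
  fun X Y => M.D X (ν Y) - M.D Y (ν X) - ν (M.bracket X Y)

/-- exterior derivative of a two-form -/
def d2 (ψ : V → V → C) : V → V → V → C :=
  fun X Y Z => M.D X (ψ Y Z) - M.D Y (ψ X Z) + M.D Z (ψ X Y)
    - ψ (M.bracket X Y) Z + ψ (M.bracket X Z) Y - ψ (M.bracket Y Z) X

/-- exterior derivative of a four-form -/
def d4 (ψ : V → V → V → V → C) : V → V → V → V → V → C := fun X Y Z W U =>
  M.D X (ψ Y Z W U) - M.D Y (ψ X Z W U) + M.D Z (ψ X Y W U) - M.D W (ψ X Y Z U)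
      + M.D U (ψ X Y Z W)
    - ψ (M.bracket X Y) Z W U + ψ (M.bracket X Z) Y W U - ψ (M.bracket X W) Y Z U
      + ψ (M.bracket X U) Y Z W
    - ψ (M.bracket Y Z) X W U + ψ (M.bracket Y W) X Z U - ψ (M.bracket Y U) X Z W
    - ψ (M.bracket Z W) X Y U + ψ (M.bracket Z U) X Y W
    - ψ (M.bracket W U) X Y Z

/-- the Nijenhuis tensor `N_A(X,Y)` -/
def nijV (A : V → V) : V → V → V := fun X Y =>
  M.bracket X Y + A (M.bracket (A X) Y) + A (M.bracket X (A Y)) - M.bracket (A X) (A Y)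

/-- the Nijenhuis `(0,3)`-tensor `N_A(X,Y,Z) = g(X, N_A(Y,Z))` -/
def nij3 (A : V → V) : V → V → V → C := fun X Y Z => M.g X (M.nijV A Y Z)

/-- the induced inner product of two 2-forms,
`⟨ψ,φ⟩ = (1/2!) ψ(e_i,e_j) φ(e_i,e_j)` -/
def inner2 (ψ φ : V → V → C) : C :=
  (1/2 : ℝ) • ∑ i, ∑ j, ψ (M.frame i) (M.frame j) * φ (M.frame i) (M.frame j)

/-- the contraction `(Λ_A β)(X) = ⟨X ⌟ β, ω_A⟩` of a three-form -/
def Lam (A : V → V) (β : V → V → V → C) : V → C :=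
  fun X => (1/2 : ℝ) •
    ∑ i, ∑ j, β X (M.frame i) (M.frame j) * M.omega A (M.frame i) (M.frame j)

/-- `λ_I(X) = (1/2n) ⟨∇_X ω_J, ω_K⟩` -/
def lambdaI : V → C := fun X =>
  (1/(2*(n:ℝ))) • M.inner2 (fun Y Z => M.nab2 (M.omega M.J) X Y Z) (M.omega M.K)

/-- `λ_J(X) = (1/2n) ⟨∇_X ω_K, ω_I⟩` -/
def lambdaJ : V → C := fun X =>
  (1/(2*(n:ℝ))) • M.inner2 (fun Y Z => M.nab2 (M.omega M.K) X Y Z) (M.omega M.I)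

/-- `λ_K(X) = (1/2n) ⟨∇_X ω_I, ω_J⟩` -/
def lambdaK : V → C := fun X =>
  (1/(2*(n:ℝ))) • M.inner2 (fun Y Z => M.nab2 (M.omega M.I) X Y Z) (M.omega M.J)

/-- codifferential of a two-form -/
def codiff2 (ψ : V → V → C) : V → C := fun Z => -∑ i, M.nab2 ψ (M.frame i) (M.frame i) Z

/-- codifferential of a four-form -/
def codiff4 (ψ : V → V → V → V → C) : V → V → V → C :=
  fun X Y Z => -∑ i, M.nab4 ψ (M.frame i) (M.frame i) X Y Z

/-- `β_I = J dω_J + K dω_K` -/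
def betaI : V → V → V → C := fun X Y Z =>
  act3 M.J (M.d2 (M.omega M.J)) X Y Z + act3 M.K (M.d2 (M.omega M.K)) X Y Z

/-- `β_J = K dω_K + I dω_I` -/
def betaJ : V → V → V → C := fun X Y Z =>
  act3 M.K (M.d2 (M.omega M.K)) X Y Z + act3 M.I (M.d2 (M.omega M.I)) X Y Z

/-- `β_K = I dω_I + J dω_J` -/
def betaK : V → V → V → C := fun X Y Z =>
  act3 M.I (M.d2 (M.omega M.I)) X Y Z + act3 M.J (M.d2 (M.omega M.J)) X Y Z

/-- the intrinsic torsion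
`ξ_X Y = -(1/4) Σ_A A (∇_X A) Y + (1/2) Σ_A λ_A(X) A Y` -/
def xi : V → V → V := fun X Y =>
  (-(1/4 : ℝ)) • (M.I (M.nabA M.I X Y) + M.J (M.nabA M.J X Y) + M.K (M.nabA M.K X Y))
    + (1/2 : ℝ) • (M.lambdaI X • M.I Y + M.lambdaJ X • M.J Y + M.lambdaK X • M.K Y)

/-- the one-form `ν^I_4 = I Λ_I β_I` -/
def nu4I : V → C := act1 M.I (M.Lam M.I M.betaI)

/-- the one-form `ν^J_4 = J Λ_J β_J` -/
def nu4J : V → C := act1 M.J (M.Lam M.J M.betaJ)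

/-- the one-form `ν^K_4 = K Λ_K β_K` -/
def nu4K : V → C := act1 M.K (M.Lam M.K M.betaK)

/-- `ν^I_3`, determined by `J Λ_J β_I = (1/(2n-1)) (ν^I_4 + (2n+1)(n-1) ν^I_3)` -/
def nu3I : V → C := fun X =>
  (1/((2*(n:ℝ)+1) * ((n:ℝ)-1))) •
    ((2*(n:ℝ)-1) • act1 M.J (M.Lam M.J M.betaI) X - M.nu4I X)

/-- `ν^J_3`, determined by `K Λ_K β_J = (1/(2n-1)) (ν^J_4 + (2n+1)(n-1) ν^J_3)` -/
def nu3J : V → C := fun X =>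
  (1/((2*(n:ℝ)+1) * ((n:ℝ)-1))) •
    ((2*(n:ℝ)-1) • act1 M.K (M.Lam M.K M.betaJ) X - M.nu4J X)

/-- `ν^K_3`, determined by `I Λ_I β_K = (1/(2n-1)) (ν^K_4 + (2n+1)(n-1) ν^K_3)` -/
def nu3K : V → C := fun X =>
  (1/((2*(n:ℝ)+1) * ((n:ℝ)-1))) •
    ((2*(n:ℝ)-1) • act1 M.I (M.Lam M.I M.betaK) X - M.nu4K X)

/-- `β^{(E)}_{3I} = -(1/2) Jν^I_3 ∧ ω_J - (1/2) Kν^I_3 ∧ ω_K + (1/(2n-1)) Iν^I_3 ∧ ω_I` -/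
def betaE3I : V → V → V → C := fun X Y Z =>
  (-(1/2:ℝ)) • wedge12 (act1 M.J M.nu3I) (M.omega M.J) X Y Z
    + (-(1/2:ℝ)) • wedge12 (act1 M.K M.nu3I) (M.omega M.K) X Y Z
    + (1/(2*(n:ℝ)-1)) • wedge12 (act1 M.I M.nu3I) (M.omega M.I) X Y Z

def betaE3J : V → V → V → C := fun X Y Z =>
  (-(1/2:ℝ)) • wedge12 (act1 M.K M.nu3J) (M.omega M.K) X Y Z
    + (-(1/2:ℝ)) • wedge12 (act1 M.I M.nu3J) (M.omega M.I) X Y Z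
    + (1/(2*(n:ℝ)-1)) • wedge12 (act1 M.J M.nu3J) (M.omega M.J) X Y Z

def betaE3K : V → V → V → C := fun X Y Z =>
  (-(1/2:ℝ)) • wedge12 (act1 M.I M.nu3K) (M.omega M.I) X Y Z
    + (-(1/2:ℝ)) • wedge12 (act1 M.J M.nu3K) (M.omega M.J) X Y Z
    + (1/(2*(n:ℝ)-1)) • wedge12 (act1 M.K M.nu3K) (M.omega M.K) X Y Z

/-- `β_{4I} = -(1/(2n-1)) Iν^I_4 ∧ ω_I` -/
def beta4I : V → V → V → C := fun X Y Z =>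
  (-(1/(2*(n:ℝ)-1))) • wedge12 (act1 M.I M.nu4I) (M.omega M.I) X Y Z

def beta4J : V → V → V → C := fun X Y Z =>
  (-(1/(2*(n:ℝ)-1))) • wedge12 (act1 M.J M.nu4J) (M.omega M.J) X Y Z

def beta4K : V → V → V → C := fun X Y Z =>
  (-(1/(2*(n:ℝ)-1))) • wedge12 (act1 M.K M.nu4K) (M.omega M.K) X Y Z

/-- `β_I^{(3+K)} = β_I - β^{(E)}_{3I} - β_{4I}` -/
def beta3KI : V → V → V → C := fun X Y Z => M.betaI X Y Z - M.betaE3I X Y Z - M.beta4I X Y Z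

def beta3KJ : V → V → V → C := fun X Y Z => M.betaJ X Y Z - M.betaE3J X Y Z - M.beta4J X Y Z

def beta3KK : V → V → V → C := fun X Y Z => M.betaK X Y Z - M.betaE3K X Y Z - M.beta4K X Y Z

/-- `β_I^{(3)} = (1/6) (2 - 𝓛_J - 𝓛_K) β_I^{(3+K)}` -/
def beta3I : V → V → V → C := fun X Y Z =>
  (1/6:ℝ) • ((2:ℝ) • M.beta3KI X Y Z - calL M.J M.beta3KI X Y Z - calL M.K M.beta3KI X Y Z)

def beta3J : V → V → V → C := fun X Y Z =>
  (1/6:ℝ) • ((2:ℝ) • M.beta3KJ X Y Z - calL M.K M.beta3KJ X Y Z - calL M.I M.beta3KJ X Y Z)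

def beta3K : V → V → V → C := fun X Y Z =>
  (1/6:ℝ) • ((2:ℝ) • M.beta3KK X Y Z - calL M.I M.beta3KK X Y Z - calL M.J M.beta3KK X Y Z)

/-- `β_I^{(K)} = (1/6) (4 + 𝓛_J + 𝓛_K) β_I^{(3+K)}` -/
def betaKI : V → V → V → C := fun X Y Z =>
  (1/6:ℝ) • ((4:ℝ) • M.beta3KI X Y Z + calL M.J M.beta3KI X Y Z + calL M.K M.beta3KI X Y Z)

def betaKJ : V → V → V → C := fun X Y Z =>
  (1/6:ℝ) • ((4:ℝ) • M.beta3KJ X Y Z + calL M.K M.beta3KJ X Y Z + calL M.I M.beta3KJ X Y Z)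

def betaKK : V → V → V → C := fun X Y Z =>
  (1/6:ℝ) • ((4:ℝ) • M.beta3KK X Y Z + calL M.I M.beta3KK X Y Z + calL M.J M.beta3KK X Y Z)

/-- the three-form `ψ^{(3)} = (1/12)(β_I^{(3)} + β_J^{(3)} + β_K^{(3)})` determining `ξ_{33}` -/
def psi3 : V → V → V → C := fun X Y Z =>
  (1/12:ℝ) • (M.beta3I X Y Z + M.beta3J X Y Z + M.beta3K X Y Z)

/-- the three-form `ψ^{(K)} = -(1/48)(β_I^{(K)} + β_J^{(K)} + β_K^{(K)})` determining `ξ_{KH}` -/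
def psiK : V → V → V → C := fun X Y Z =>
  (-(1/48:ℝ)) • (M.betaKI X Y Z + M.betaKJ X Y Z + M.betaKK X Y Z)

/-- the three-form `ψ^{(3)}_I` determining `ξ_{3H}` -/
def psi3I : V → V → V → C := fun X Y Z =>
  (-(1/8:ℝ)) • M.beta3I X Y Z
    + (1/48:ℝ) • ((3:ℝ) • (M.beta3I X Y Z + M.beta3J X Y Z + M.beta3K X Y Z)
        + calL M.I (fun a b c => M.beta3I a b c + M.beta3J a b c + M.beta3K a b c) X Y Z)

def psi3J : V → V → V → C := fun X Y Z =>
  (-(1/8:ℝ)) • M.beta3J X Y Z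
    + (1/48:ℝ) • ((3:ℝ) • (M.beta3I X Y Z + M.beta3J X Y Z + M.beta3K X Y Z)
        + calL M.J (fun a b c => M.beta3I a b c + M.beta3J a b c + M.beta3K a b c) X Y Z)

def psi3K : V → V → V → C := fun X Y Z =>
  (-(1/8:ℝ)) • M.beta3K X Y Z
    + (1/48:ℝ) • ((3:ℝ) • (M.beta3I X Y Z + M.beta3J X Y Z + M.beta3K X Y Z)
        + calL M.K (fun a b c => M.beta3I a b c + M.beta3J a b c + M.beta3K a b c) X Y Z)

/-- the three-form `ψ^{(K)}_I` determining `ξ_{K3}` -/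
def psiKI : V → V → V → C := fun X Y Z =>
  (-(1/2:ℝ)) • M.betaKI X Y Z
    + (1/6:ℝ) • (M.betaKI X Y Z + M.betaKJ X Y Z + M.betaKK X Y Z)

def psiKJ : V → V → V → C := fun X Y Z =>
  (-(1/2:ℝ)) • M.betaKJ X Y Z
    + (1/6:ℝ) • (M.betaKI X Y Z + M.betaKJ X Y Z + M.betaKK X Y Z)

def psiKK : V → V → V → C := fun X Y Z =>
  (-(1/2:ℝ)) • M.betaKK X Y Z
    + (1/6:ℝ) • (M.betaKI X Y Z + M.betaKJ X Y Z + M.betaKK X Y Z)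

/-- the one-form `θ^ξ` determining `ξ_{EH}`,
defined by `(6/n)(2n+1)(n-1) θ^ξ(X) = -⟨ξ_{e_i} e_i, X⟩` -/
def thetaXi : V → C := fun X =>
  (-((n:ℝ)/(6*(2*(n:ℝ)+1)*((n:ℝ)-1)))) • ∑ i, M.g (M.xi (M.frame i) (M.frame i)) X

/-- the local one-form `θ^ξ_I`, defined by `(2/n)(2n+1)(n-1) θ^ξ_I(X) = -⟨I ξ_{e_i} I e_i, X⟩` -/
def thetaXiI : V → C := fun X =>
  (-((n:ℝ)/(2*(2*(n:ℝ)+1)*((n:ℝ)-1)))) •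
    ∑ i, M.g (M.I (M.xi (M.frame i) (M.I (M.frame i)))) X

def thetaXiJ : V → C := fun X =>
  (-((n:ℝ)/(2*(2*(n:ℝ)+1)*((n:ℝ)-1)))) •
    ∑ i, M.g (M.J (M.xi (M.frame i) (M.J (M.frame i)))) X

def thetaXiK : V → C := fun X =>
  (-((n:ℝ)/(2*(2*(n:ℝ)+1)*((n:ℝ)-1)))) •
    ∑ i, M.g (M.K (M.xi (M.frame i) (M.K (M.frame i)))) X

/-- `α_I = -λ_I ⊗ g + (1/2)(J_(2) - J_(3)) ∇ω_K` -/
def alphaI : V → V → V → C := fun X Y Z =>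
  -(M.lambdaI X * M.g Y Z)
    + (1/2:ℝ) • (-(M.nab2 (M.omega M.K) X (M.J Y) Z) + M.nab2 (M.omega M.K) X Y (M.J Z))

def alphaJ : V → V → V → C := fun X Y Z =>
  -(M.lambdaJ X * M.g Y Z)
    + (1/2:ℝ) • (-(M.nab2 (M.omega M.I) X (M.K Y) Z) + M.nab2 (M.omega M.I) X Y (M.K Z))

def alphaK : V → V → V → C := fun X Y Z =>
  -(M.lambdaK X * M.g Y Z)
    + (1/2:ℝ) • (-(M.nab2 (M.omega M.J) X (M.I Y) Z) + M.nab2 (M.omega M.J) X Y (M.I Z))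

/-- the one-form `η_I(X) = α_I(e_i; e_i, X)` -/
def etaI : V → C := fun X => ∑ i, M.alphaI (M.frame i) (M.frame i) X

def etaJ : V → C := fun X => ∑ i, M.alphaJ (M.frame i) (M.frame i) X

def etaK : V → C := fun X => ∑ i, M.alphaK (M.frame i) (M.frame i) X

/-- the fundamental four-form `Ω = Σ_A ω_A ∧ ω_A` -/
def Omega4 : V → V → V → V → C := fun X Y Z W =>
  wedge22 (M.omega M.I) (M.omega M.I) X Y Z W
    + wedge22 (M.omega M.J) (M.omega M.J) X Y Z W
    + wedge22 (M.omega M.K) (M.omega M.K) X Y Z W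

/-- the one-form `θ^{d*Ω} = (1/3) Σ_A A Λ_A d*Ω` -/
def thetaDOmega : V → C := fun X =>
  (1/3:ℝ) • (act1 M.I (M.Lam M.I (M.codiff4 M.Omega4)) X
    + act1 M.J (M.Lam M.J (M.codiff4 M.Omega4)) X
    + act1 M.K (M.Lam M.K (M.codiff4 M.Omega4)) X)

/-- the vector-valued torsion: `g(W, T(X,Y)) = T(W,X,Y)` -/
def Tvec (T : V → V → V → C) : V → V → V := fun X Y => ∑ i, T (M.frame i) X Y • M.frame i

/-- the connection `∇ + (1/2) T` associated to a torsion (0,3)-tensor `T` -/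
def nabT (T : V → V → V → C) : V → V → V := fun X Y => M.nab X Y + (1/2:ℝ) • M.Tvec T X Y

/-- a connection is metric -/
def MetricConn (nab' : V → V → V) : Prop :=
  ∀ X Y Z, M.D X (M.g Y Z) = M.g (nab' X Y) Z + M.g Y (nab' X Z)

/-- a connection is quaternionic, with associated local one-forms `γ_I, γ_J, γ_K`:
`∇'_X I = γ_K(X) J - γ_J(X) K`, and cyclically -/
def QuatConn (nab' : V → V → V) (γI γJ γK : V → C) : Prop :=
  (∀ X Y, nab' X (M.I Y) - M.I (nab' X Y) = γK X • M.J Y - γJ X • M.K Y) ∧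
  (∀ X Y, nab' X (M.J Y) - M.J (nab' X Y) = γI X • M.K Y - γK X • M.I Y) ∧
  (∀ X Y, nab' X (M.K Y) - M.K (nab' X Y) = γJ X • M.I Y - γI X • M.J Y)

/-- the HKT condition: `I, J, K` integrable and there is a metric connection
`∇ + (1/2)T` with totally skew torsion making `I, J, K` parallel -/
def IsHKT : Prop :=
  (∀ X Y, M.nijV M.I X Y = 0) ∧ (∀ X Y, M.nijV M.J X Y = 0) ∧
  (∀ X Y, M.nijV M.K X Y = 0) ∧
  ∃ T : V → V → V → C, IsAlt3 T ∧ Lin3 T ∧ M.MetricConn (M.nabT T) ∧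
    (∀ X Y, M.nabT T X (M.I Y) = M.I (M.nabT T X Y)) ∧
    (∀ X Y, M.nabT T X (M.J Y) = M.J (M.nabT T X Y)) ∧
    (∀ X Y, M.nabT T X (M.K Y) = M.K (M.nabT T X Y))

/-- membership of a three-form in `KH`: type `{2,1}` for each `A` and `Λ_A ψ = 0` -/
def InKH3 (ψ : V → V → V → C) : Prop :=
  IsAlt3 ψ ∧ Lin3 ψ ∧
  calL M.I ψ = ψ ∧ calL M.J ψ = ψ ∧ calL M.K ψ = ψ ∧
  M.Lam M.I ψ = 0 ∧ M.Lam M.J ψ = 0 ∧ M.Lam M.K ψ = 0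

/-- the `(0,3)`-tensor of the `KH`-component of the torsion determined by `ψ^{(K)}`:
`3ψ - Σ_A A_(23) ψ` -/
def xiKH3 (ψ : V → V → V → C) : V → V → V → C := fun X Y Z =>
  (3:ℝ) • ψ X Y Z - (op23 M.I ψ X Y Z + op23 M.J ψ X Y Z + op23 M.K ψ X Y Z)

/-- the `(0,3)`-tensor of the `EH`-component of the torsion determined by the
one-form `θ`: `3 e_i ⊗ e_i ∧ θ - Σ_A (e_i ⊗ A e_i ∧ A θ + (2/n) A θ ⊗ ω_A)` -/
def xiEH3 (θ : V → C) : V → V → V → C := fun X Y Z =>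
  (3:ℝ) • ∑ i, M.g (M.frame i) X *
      (M.g (M.frame i) Y * θ Z - M.g (M.frame i) Z * θ Y)
  - ((∑ i, M.g (M.frame i) X *
        (M.g (M.I (M.frame i)) Y * act1 M.I θ Z - M.g (M.I (M.frame i)) Z * act1 M.I θ Y))
    + (∑ i, M.g (M.frame i) X *
        (M.g (M.J (M.frame i)) Y * act1 M.J θ Z - M.g (M.J (M.frame i)) Z * act1 M.J θ Y))
    + (∑ i, M.g (M.frame i) X *
        (M.g (M.K (M.frame i)) Y * act1 M.K θ Z - M.g (M.K (M.frame i)) Z * act1 M.K θ Y)))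
  - (2/(n:ℝ)) • (act1 M.I θ X * M.omega M.I Y Z + act1 M.J θ X * M.omega M.J Y Z
      + act1 M.K θ X * M.omega M.K Y Z)

/-- the intrinsic torsion lies in `(K+E)H`: it is the sum of a `KH`-tensor and an
`EH`-tensor as described in §3 of the paper -/
def inKEH : Prop :=
  ∃ (ψ : V → V → V → C) (θ : V → C), M.InKH3 ψ ∧ Lin1 θ ∧
    ∀ X Y Z, M.g Y (M.xi X Z) = M.xiKH3 ψ X Y Z + M.xiEH3 θ X Y Z

end derived

end AQH

namespace AQH

variable {n : ℕ} {C V : Type*} [CommRing C] [Algebra ℝ C] [AddCommGroup V] [Module C V]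
  [Module ℝ V] [IsScalarTower ℝ C V]

variable (M : AQH n C V)

/-- `T` is the torsion three-form of a metric quaternionic connection
`∇^QKT = ∇ + (1/2)T` with `T` a skew-symmetric three-form in `(K+E)H`,
the `+3`-eigenspace of `𝓛 = Σ_A (A_(12)+A_(13)+A_(23))`. -/
def QKTtorsion (T : V → V → V → C) : Prop :=
  IsAlt3 T ∧ Lin3 T ∧
  (∀ X Y Z, calL M.I T X Y Z + calL M.J T X Y Z + calL M.K T X Y Z = (3:ℝ) • T X Y Z) ∧
  M.MetricConn (M.nabT T) ∧
  ∃ γI γJ γK : V → C, M.QuatConn (M.nabT T) γI γJ γK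

end AQH

namespace AQH

section qktproof

set_option linter.unusedSectionVars false
set_option linter.unusedSimpArgs false

variable {n : ℕ} {C V : Type*} [CommRing C] [Algebra ℝ C] [AddCommGroup V] [Module C V]

/-- tensoriality of a one-form, in additive form -/
structure L1 (ν : V → C) : Prop where
  add : ∀ X Y, ν (X + Y) = ν X + ν Y
  smul : ∀ (f : C) X, ν (f • X) = f * ν X

theorem L1.neg {ν : V → C} (h : L1 ν) (X : V) : ν (-X) = -ν X := by
  have := h.smul (-1) X
  simpa using this

theorem L1.zero {ν : V → C} (h : L1 ν) : ν 0 = 0 := by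
  have := h.smul 0 0
  simpa using this

theorem L1.sum {ν : V → C} (h : L1 ν) {ι : Type*} (s : Finset ι) (f : ι → C) (e : ι → V) :
    ν (∑ i ∈ s, f i • e i) = ∑ i ∈ s, f i * ν (e i) := by
  classical
  induction s using Finset.induction_on with
  | empty => simpa using h.zero
  | insert a s ha ih => rw [Finset.sum_insert ha, Finset.sum_insert ha, h.add, h.smul, ih]

theorem L1.ofLin {ν : V → C} (h : Lin1 ν) : L1 ν := by
  have h0 : ν 0 = 0 := by
    have := h 1 0 0
    simpa using this
  refine ⟨fun X Y => ?_, fun f X => ?_⟩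
  · have := h 1 X Y
    simpa using this
  · have := h f X 0
    simpa [h0] using this

theorem L1.toLin {ν : V → C} (h : L1 ν) : Lin1 ν := fun f X X' => by rw [h.add, h.smul]

/-- a quaternionic triple -/
structure Quat (M : AQH n C V) (A B E : V → V) : Prop where
  addA : ∀ X Y, A (X + Y) = A X + A Y
  addB : ∀ X Y, B (X + Y) = B X + B Y
  addE : ∀ X Y, E (X + Y) = E X + E Y
  smulA : ∀ (f : C) X, A (f • X) = f • A X
  smulB : ∀ (f : C) X, B (f • X) = f • B X
  smulE : ∀ (f : C) X, E (f • X) = f • E X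
  AA : ∀ X, A (A X) = -X
  BB : ∀ X, B (B X) = -X
  EE : ∀ X, E (E X) = -X
  AB : ∀ X, A (B X) = E X
  BA : ∀ X, B (A X) = -E X
  BE : ∀ X, B (E X) = A X
  EB : ∀ X, E (B X) = -A X
  EA : ∀ X, E (A X) = B X
  AE : ∀ X, A (E X) = -B X
  skA : ∀ X Y, M.g (A X) Y = -M.g X (A Y)
  skB : ∀ X Y, M.g (B X) Y = -M.g X (B Y)
  skE : ∀ X Y, M.g (E X) Y = -M.g X (E Y)

theorem Quat.cyc {M : AQH n C V} {A B E : V → V} (q : Quat M A B E) : Quat M B E A :=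
  ⟨q.addB, q.addE, q.addA, q.smulB, q.smulE, q.smulA, q.BB, q.EE, q.AA, q.BE, q.EB, q.EA, q.AE,
    q.AB, q.BA, q.skB, q.skE, q.skA⟩

theorem Quat.negA {M : AQH n C V} {A B E : V → V} (q : Quat M A B E) (X : V) :
    A (-X) = -A X := by
  have := q.smulA (-1) X
  simpa using this

theorem Quat.negB {M : AQH n C V} {A B E : V → V} (q : Quat M A B E) (X : V) :
    B (-X) = -B X := q.cyc.negA X

theorem Quat.negE {M : AQH n C V} {A B E : V → V} (q : Quat M A B E) (X : V) :
    E (-X) = -E X := q.cyc.cyc.negA X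

theorem g_addr (M : AQH n C V) (X Y Z : V) : M.g X (Y + Z) = M.g X Y + M.g X Z := by
  rw [M.g_symm, M.g_add, M.g_symm Y, M.g_symm Z]

theorem g_smulr (M : AQH n C V) (f : C) (X Y : V) : M.g X (f • Y) = f * M.g X Y := by
  rw [M.g_symm, M.g_smul, M.g_symm Y]

theorem g_L1 (M : AQH n C V) (X : V) : L1 (M.g X) := ⟨M.g_addr X, fun f Y => M.g_smulr f X Y⟩

theorem g_L1' (M : AQH n C V) (X : V) : L1 (fun Y => M.g Y X) :=
  ⟨fun Y Z => M.g_add Y Z X, fun f Y => M.g_smul f Y X⟩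

theorem g_negr (M : AQH n C V) (X Y : V) : M.g X (-Y) = -M.g X Y := (M.g_L1 X).neg Y

theorem g_negl (M : AQH n C V) (X Y : V) : M.g (-X) Y = -M.g X Y := (M.g_L1' Y).neg X

theorem g_subr (M : AQH n C V) (X Y Z : V) : M.g X (Y - Z) = M.g X Y - M.g X Z := by
  rw [sub_eq_add_neg, g_addr, g_negr, sub_eq_add_neg]

theorem g_ext (M : AQH n C V) {X Y : V} (h : ∀ Z, M.g Z X = M.g Z Y) : X = Y := by
  rw [M.frame_span X, M.frame_span Y]
  refine Finset.sum_congr rfl fun i _ => ?_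
  rw [M.g_symm X, M.g_symm Y, h]

theorem quatIJK (M : AQH n C V) : Quat M M.I M.J M.K := by
  have addI : ∀ X Y, M.I (X + Y) = M.I X + M.I Y := fun X Y => by
    simpa using M.I_lin 1 X Y
  have addJ : ∀ X Y, M.J (X + Y) = M.J X + M.J Y := fun X Y => by
    simpa using M.J_lin 1 X Y
  have addK : ∀ X Y, M.K (X + Y) = M.K X + M.K Y := fun X Y => by
    simpa using M.K_lin 1 X Y
  have I0 : M.I 0 = 0 := by simpa using addI 0 0
  have J0 : M.J 0 = 0 := by simpa using addJ 0 0
  have K0 : M.K 0 = 0 := by simpa using addK 0 0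
  have smI : ∀ (f : C) X, M.I (f • X) = f • M.I X := fun f X => by
    simpa [I0] using M.I_lin f X 0
  have smJ : ∀ (f : C) X, M.J (f • X) = f • M.J X := fun f X => by
    simpa [J0] using M.J_lin f X 0
  have smK : ∀ (f : C) X, M.K (f • X) = f • M.K X := fun f X => by
    simpa [K0] using M.K_lin f X 0
  have nI : ∀ X, M.I (-X) = -M.I X := fun X => by simpa using smI (-1) X
  have nJ : ∀ X, M.J (-X) = -M.J X := fun X => by simpa using smJ (-1) X
  have skI : ∀ X Y, M.g (M.I X) Y = -M.g X (M.I Y) := fun X Y => by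
    have := M.I_metric (M.I X) Y
    rw [M.I_sq, g_negl] at this
    rw [← this]
  have skJ : ∀ X Y, M.g (M.J X) Y = -M.g X (M.J Y) := fun X Y => by
    have := M.J_metric (M.J X) Y
    rw [M.J_sq, g_negl] at this
    rw [← this]
  have JI : ∀ X, M.J (M.I X) = -M.K X := fun X => by rw [M.K_def, M.anticomm, neg_neg]
  refine ⟨addI, addJ, addK, smI, smJ, smK, M.I_sq, M.J_sq, ?_, fun X => (M.K_def X).symm, JI,
    ?_, ?_, ?_, ?_, skI, skJ, ?_⟩
  · intro X
    rw [M.K_def, M.K_def, ← M.K_def X, M.K_def X, M.anticomm X, nJ, M.J_sq, neg_neg, M.I_sq]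
  · intro X
    rw [M.K_def, M.anticomm, nJ, M.J_sq, neg_neg]
  · intro X
    rw [M.K_def, M.J_sq, nI]
  · intro X
    rw [M.K_def, JI, nI, M.K_def, M.I_sq, neg_neg]
  · intro X
    rw [M.K_def, M.I_sq]
  · intro X Y
    rw [M.K_def, skI, skJ, JI, g_negr, neg_neg]

/-- trilinear and alternating -/
structure L3 (T : V → V → V → C) : Prop where
  l1 : ∀ Y Z, L1 (fun X => T X Y Z)
  l2 : ∀ X Z, L1 (fun Y => T X Y Z)
  l3 : ∀ X Y, L1 (fun Z => T X Y Z)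
  a12 : ∀ X Y Z, T Y X Z = -T X Y Z
  a23 : ∀ X Y Z, T X Z Y = -T X Y Z

theorem L3.of {T : V → V → V → C} (ha : IsAlt3 T) (hl : Lin3 T) : L3 T := by
  have h1 : ∀ Y Z, L1 (fun X => T X Y Z) := fun Y Z => L1.ofLin (fun f X X' => hl f X X' Y Z)
  have h2 : ∀ X Z, L1 (fun Y => T X Y Z) := fun X Z =>
    ⟨fun Y Y' => by
      have := (h1 X Z).add Y Y'
      simp only [ha.1 X] at this
      linear_combination -this,
     fun f Y => by
      have := (h1 X Z).smul f Y
      simp only [ha.1 X] at this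
      linear_combination -this⟩
  refine ⟨h1, h2, fun X Y => ⟨fun Z Z' => ?_, fun f Z => ?_⟩, ha.1, ha.2⟩
  · have := (h2 X Y).add Z Z'
    simp only [ha.2 X Y] at this
    linear_combination -this
  · have := (h2 X Y).smul f Z
    simp only [ha.2 X Y] at this
    linear_combination -this

theorem L3.isAlt {T : V → V → V → C} (h : L3 T) : IsAlt3 T := ⟨h.a12, h.a23⟩

theorem L3.lin {T : V → V → V → C} (h : L3 T) : Lin3 T := fun f X X' Y Z => (h.l1 Y Z).toLin f X X'

theorem L3.n1 {T : V → V → V → C} (h : L3 T) (X Y Z : V) : T (-X) Y Z = -T X Y Z :=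
  (h.l1 Y Z).neg X

theorem L3.n2 {T : V → V → V → C} (h : L3 T) (X Y Z : V) : T X (-Y) Z = -T X Y Z :=
  (h.l2 X Z).neg Y

theorem L3.n3 {T : V → V → V → C} (h : L3 T) (X Y Z : V) : T X Y (-Z) = -T X Y Z :=
  (h.l3 X Y).neg Z

theorem two_cancel {a b : C} (h : 2 * a = 2 * b) : a = b := by
  have h2 : algebraMap ℝ C (1/2) * 2 = 1 := by
    rw [← map_ofNat (algebraMap ℝ C) 2, ← map_mul, ← map_one (algebraMap ℝ C)]; norm_num
  linear_combination (algebraMap ℝ C (1/2)) * h + (b - a) * h2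

theorem three_cancel {a b : C} (h : 3 * a = 3 * b) : a = b := by
  have h2 : algebraMap ℝ C (1/3) * 3 = 1 := by
    rw [← map_ofNat (algebraMap ℝ C) 3, ← map_mul, ← map_one (algebraMap ℝ C)]; norm_num
  linear_combination (algebraMap ℝ C (1/3)) * h + (b - a) * h2

theorem half_mul : algebraMap ℝ C (1/2) * 2 = 1 := by
  rw [← map_ofNat (algebraMap ℝ C) 2, ← map_mul, ← map_one (algebraMap ℝ C)]; norm_num

theorem calL_split {M : AQH n C V} {A B E : V → V} (q : Quat M A B E) {T : V → V → V → C}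
    (h : L3 T)
    (hL : ∀ X Y Z, calL A T X Y Z + calL B T X Y Z + calL E T X Y Z = 3 * T X Y Z) (X Y Z : V) :
    calL A T X Y Z = T X Y Z := by
  apply two_cancel
  apply three_cancel
  have h0 := hL X Y Z
  have h1 := hL X (A Y) (A Z)
  have h2 := hL (A X) Y (A Z)
  have h3 := hL (A X) (A Y) Z
  simp only [calL, op12, op13, op23, q.AA, q.BA, q.EA, h.n1, h.n2, h.n3] at *
  linear_combination h0 - h1 - h2 - h3

/-- contraction -/
theorem contr (M : AQH n C V) {ν : V → C} (h : L1 ν) (X : V) :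
    ∑ i, ν (M.frame i) * M.g (M.frame i) X = ν X := by
  conv_rhs => rw [M.frame_span X, h.sum]
  refine Finset.sum_congr rfl fun i _ => ?_
  rw [M.g_symm X, mul_comm]

theorem tr_swap (M : AQH n C V) {A : V → V} (skA : ∀ X Y, M.g (A X) Y = -M.g X (A Y))
    {b : V → V → C} (hl : ∀ Y, L1 (fun X => b X Y)) (hr : ∀ X, L1 (b X)) :
    ∑ i, b (A (M.frame i)) (M.frame i) = -∑ i, b (M.frame i) (A (M.frame i)) := by
  have e1 : ∀ i, b (A (M.frame i)) (M.frame i)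
      = ∑ k, b (M.frame k) (M.frame i) * M.g (M.frame k) (A (M.frame i)) :=
    fun i => (contr M (hl (M.frame i)) (A (M.frame i))).symm
  have e2 : ∀ i, b (M.frame i) (A (M.frame i))
      = ∑ k, b (M.frame i) (M.frame k) * M.g (M.frame k) (A (M.frame i)) :=
    fun i => (contr M (hr (M.frame i)) (A (M.frame i))).symm
  simp only [e1, e2]
  rw [Finset.sum_comm, ← Finset.sum_neg_distrib]
  refine Finset.sum_congr rfl fun i _ => ?_
  rw [← Finset.sum_neg_distrib]
  refine Finset.sum_congr rfl fun k _ => ?_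
  rw [M.g_symm (M.frame k), skA]
  ring

/-- double trace -/
theorem tr_both (M : AQH n C V) {A B E : V → V} (q : Quat M A B E)
    {b : V → V → C} (hl : ∀ Y, L1 (fun X => b X Y)) (hr : ∀ X, L1 (b X)) :
    ∑ i, b (A (M.frame i)) (A (M.frame i)) = ∑ i, b (M.frame i) (M.frame i) := by
  have := tr_swap M q.skA (b := fun X Y => b X (A Y)) (fun Y => hl (A Y))
    (fun X => ⟨fun Y Z => by rw [q.addA, (hr X).add], fun f Y => by rw [q.smulA, (hr X).smul]⟩)
  rw [this, ← Finset.sum_neg_distrib]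
  refine Finset.sum_congr rfl fun i _ => ?_
  rw [q.AA, (hr _).neg, neg_neg]

theorem Lam_eq (M : AQH n C V) (A : V → V) {T : V → V → V → C} (h : L3 T) (X : V) :
    M.Lam A T X = algebraMap ℝ C (1/2) * ∑ j, T X (A (M.frame j)) (M.frame j) := by
  unfold Lam omega
  rw [Algebra.smul_def, Finset.sum_comm]
  congr 1
  exact Finset.sum_congr rfl fun j _ => contr M (h.l2 X (M.frame j)) (A (M.frame j))

theorem two_Lam (M : AQH n C V) (A : V → V) {T : V → V → V → C} (h : L3 T) (X : V) :
    ∑ j, T X (A (M.frame j)) (M.frame j) = 2 * M.Lam A T X := by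
  rw [Lam_eq M A h]
  linear_combination (-∑ j, T X (A (M.frame j)) (M.frame j)) * half_mul (C := C)

theorem Lam_L1 (M : AQH n C V) (A : V → V) {T : V → V → V → C} (h : L3 T) :
    L1 (M.Lam A T) := by
  refine ⟨fun X Y => ?_, fun f X => ?_⟩
  · simp only [Lam_eq M A h]
    rw [← mul_add, ← Finset.sum_add_distrib]
    congr 1
    exact Finset.sum_congr rfl fun j _ => (h.l1 _ _).add X Y
  · simp only [Lam_eq M A h]
    rw [mul_left_comm, Finset.mul_sum (a := f)]
    congr 1
    exact Finset.sum_congr rfl fun j _ => (h.l1 _ _).smul f X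

/-- `Λ_A T = -(Λ_E T) ∘ B` -/
theorem Lam_rel {M : AQH n C V} {A B E : V → V} (q : Quat M A B E) {T : V → V → V → C}
    (h : L3 T) (hB : ∀ X Y Z, calL B T X Y Z = T X Y Z) (X : V) :
    M.Lam A T X = -M.Lam E T (B X) := by
  have e : ∑ j, calL B T X (A (M.frame j)) (M.frame j)
      = ∑ j, T X (A (M.frame j)) (M.frame j) :=
    Finset.sum_congr rfl fun j _ => hB _ _ _
  simp only [calL, op12, op13, op23, Finset.sum_add_distrib, q.BA, h.n2,
    Finset.sum_neg_distrib] at e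
  have e2 : ∑ i, T (B X) (A (M.frame i)) (B (M.frame i))
      = -∑ i, T (B X) (E (M.frame i)) (M.frame i) := by
    have := tr_both M q.cyc (b := fun Y Z => T (B X) (E Y) Z)
      (fun Z => ⟨fun Y Y' => by rw [q.addE, (h.l2 _ _).add],
        fun f Y => by rw [q.smulE, (h.l2 _ _).smul]⟩) (fun Y => h.l3 _ _)
    simp only [q.EB, h.n2, Finset.sum_neg_distrib] at this
    linear_combination -this
  have e3 : ∑ i, T X (E (M.frame i)) (B (M.frame i))
      = ∑ i, T X (A (M.frame i)) (M.frame i) := by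
    have := tr_both M q.cyc (b := fun Y Z => T X (A Y) Z)
      (fun Z => ⟨fun Y Y' => by rw [q.addA, (h.l2 _ _).add],
        fun f Y => by rw [q.smulA, (h.l2 _ _).smul]⟩) (fun Y => h.l3 _ _)
    simpa only [q.AB] using this
  rw [e2, e3] at e
  simp only [two_Lam M _ h] at e
  apply two_cancel
  apply two_cancel
  linear_combination -e

/-- the model `EH` three-form -/
def psiE (M : AQH n C V) (θ : V → C) : V → V → V → C := fun X Y Z =>
  wedge12 (act1 M.I θ) (M.omega M.I) X Y Z + wedge12 (act1 M.J θ) (M.omega M.J) X Y Z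
    + wedge12 (act1 M.K θ) (M.omega M.K) X Y Z

/-- the general version -/
def psiG (M : AQH n C V) (A B E : V → V) (θ : V → C) : V → V → V → C := fun X Y Z =>
  wedge12 (act1 A θ) (M.omega A) X Y Z + wedge12 (act1 B θ) (M.omega B) X Y Z
    + wedge12 (act1 E θ) (M.omega E) X Y Z

theorem psiG_cyc (M : AQH n C V) (A B E : V → V) (θ : V → C) :
    psiG M B E A θ = psiG M A B E θ := by
  funext X Y Z
  unfold psiG
  ring

theorem act1_L1 {A : V → V} (hadd : ∀ X Y, A (X + Y) = A X + A Y)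
    (hsm : ∀ (f : C) X, A (f • X) = f • A X) {θ : V → C} (h : L1 θ) : L1 (act1 A θ) :=
  ⟨fun X Y => by simp only [act1, hadd, h.add]; ring,
   fun f X => by simp only [act1, hsm, h.smul]; ring⟩

theorem omega_skew {M : AQH n C V} {A : V → V} (skA : ∀ X Y, M.g (A X) Y = -M.g X (A Y))
    (X Y : V) : M.g Y (A X) = -M.g X (A Y) := by
  rw [M.g_symm, skA]

theorem wedge_L3 {M : AQH n C V} {A B E : V → V} (q : Quat M A B E) {ν : V → C} (h : L1 ν) :
    L3 (wedge12 ν (M.omega A)) := by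
  apply L3.of
  · refine ⟨fun X Y Z => ?_, fun X Y Z => ?_⟩
    · simp only [wedge12, omega, omega_skew q.skA X Y]
      ring
    · simp only [wedge12, omega, omega_skew q.skA Y Z]
      ring
  · intro f X X' Y Z
    simp only [wedge12, omega, h.add, h.smul, M.g_add, M.g_smul]
    ring

theorem L3.add {T S : V → V → V → C} (hT : L3 T) (hS : L3 S) :
    L3 (fun X Y Z => T X Y Z + S X Y Z) := by
  apply L3.of
  · exact ⟨fun X Y Z => by simp only [hT.a12 X Y, hS.a12 X Y]; ring, fun X Y Z => by simp only [hT.a23 X Y, hS.a23 X Y]; ring⟩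
  · intro f X X' Y Z
    simp only [hT.lin f X X', hS.lin f X X']
    ring

theorem L3.smul {T : V → V → V → C} (hT : L3 T) (c : C) :
    L3 (fun X Y Z => c * T X Y Z) := by
  apply L3.of
  · exact ⟨fun X Y Z => by simp only [hT.a12 X Y]; ring, fun X Y Z => by simp only [hT.a23 X Y]; ring⟩
  · intro f X X' Y Z
    simp only [hT.lin f X X']
    ring

theorem psiG_L3 {M : AQH n C V} {A B E : V → V} (q : Quat M A B E) {θ : V → C} (h : L1 θ) :
    L3 (psiG M A B E θ) :=
  ((wedge_L3 q (act1_L1 q.addA q.smulA h)).add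
    (wedge_L3 q.cyc (act1_L1 q.addB q.smulB h))).add
    (wedge_L3 q.cyc.cyc (act1_L1 q.addE q.smulE h))

theorem psiG_calL {M : AQH n C V} {A B E : V → V} (q : Quat M A B E) {θ : V → C} (h : L1 θ)
    (X Y Z : V) : calL A (psiG M A B E θ) X Y Z = psiG M A B E θ X Y Z := by
  simp only [calL, op12, op13, op23, psiG, wedge12, act1, omega, q.AA, q.BA, q.EA, q.AB, q.AE,
    q.skA, q.negA, q.negB, q.negE, h.neg, g_negr]
  ring

theorem g_diag {M : AQH n C V} {A : V → V} (skA : ∀ X Y, M.g (A X) Y = -M.g X (A Y)) (X : V) :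
    M.g X (A X) = 0 := by
  apply two_cancel
  linear_combination omega_skew skA X X

theorem Lam_wedge (M : AQH n C V) {A B : V → V} {ν : V → C} (h : L1 ν)
    (addA : ∀ X Y, A (X + Y) = A X + A Y) (smulA : ∀ (f : C) X, A (f • X) = f • A X)
    (skA : ∀ X Y, M.g (A X) Y = -M.g X (A Y)) (skB : ∀ X Y, M.g (B X) Y = -M.g X (B Y))
    (X : V) :
    ∑ j, wedge12 ν (M.omega B) X (A (M.frame j)) (M.frame j)
      = ν X * (∑ j, M.g (A (M.frame j)) (B (M.frame j))) + 2 * ν (A (B X)) := by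
  have hνA : L1 (fun Y => ν (A Y)) :=
    ⟨fun Y Z => by simp only [addA, h.add], fun f Y => by simp only [smulA, h.smul]⟩
  have e1 := contr M hνA (B X)
  have e2 := contr M h (A (B X))
  have : ∀ j, wedge12 ν (M.omega B) X (A (M.frame j)) (M.frame j)
      = ν X * M.g (A (M.frame j)) (B (M.frame j))
        + ν (A (M.frame j)) * M.g (M.frame j) (B X)
        + ν (M.frame j) * M.g (M.frame j) (A (B X)) := by
    intro j
    have s1 : M.g X (B (M.frame j)) = -M.g (M.frame j) (B X) := omega_skew skB _ _
    have s2 : M.g X (B (A (M.frame j))) = M.g (M.frame j) (A (B X)) := by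
      rw [omega_skew skB, skA, neg_neg]
    simp only [wedge12, omega, s1, s2]
    ring
  simp only [this, Finset.sum_add_distrib, ← Finset.mul_sum, e1]
  rw [e2]
  ring

theorem psiG_Lam {M : AQH n C V} {A B E : V → V} (q : Quat M A B E) {θ : V → C} (h : L1 θ)
    (X : V) : M.Lam A (psiG M A B E θ) X = (2 * (n : C) + 1) * act1 A θ X := by
  apply two_cancel
  rw [← two_Lam M A (psiG_L3 q h)]
  unfold psiG
  simp only [Finset.sum_add_distrib]
  rw [Lam_wedge M (act1_L1 q.addA q.smulA h) q.addA q.smulA q.skA q.skA,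
    Lam_wedge M (act1_L1 q.addB q.smulB h) q.addA q.smulA q.skA q.skB,
    Lam_wedge M (act1_L1 q.addE q.smulE h) q.addA q.smulA q.skA q.skE]
  simp only [q.skA, q.AA, q.AB, q.AE, g_negr, g_diag q.skE, g_diag q.skB, M.frame_orthonormal,
    act1, q.negA, q.negB, q.negE, q.BE, q.EB, h.neg]
  simp
  ring

theorem psiG_P {M : AQH n C V} {A B E : V → V} (q : Quat M A B E) {θ : V → C} (h : L1 θ)
    (X Y Z : V) :
    3 * psiG M A B E θ X Y Z - (op23 A (psiG M A B E θ) X Y Z + op23 B (psiG M A B E θ) X Y Z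
        + op23 E (psiG M A B E θ) X Y Z)
      = 3 * (M.g X Y * θ Z - M.g X Z * θ Y)
        + (M.omega A X Y * act1 A θ Z - M.omega A X Z * act1 A θ Y)
        + (M.omega B X Y * act1 B θ Z - M.omega B X Z * act1 B θ Y)
        + (M.omega E X Y * act1 E θ Z - M.omega E X Z * act1 E θ Y)
        + 4 * (act1 A θ X * M.omega A Y Z + act1 B θ X * M.omega B Y Z
          + act1 E θ X * M.omega E Y Z) := by
  simp only [op23, psiG, wedge12, act1, omega, q.AA, q.BA, q.EA, q.AB, q.AE, q.BB, q.EE, q.BE, q.EB,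
    q.skA, q.skB, q.skE, q.negA, q.negB, q.negE, h.neg, g_negr]
  ring

end qktproof

end AQH

namespace AQH

section qktproof2

set_option linter.unusedSectionVars false
set_option linter.unusedSimpArgs false

variable {n : ℕ} {C V : Type*} [CommRing C] [Algebra ℝ C] [AddCommGroup V] [Module C V]
  [Module ℝ V] [IsScalarTower ℝ C V]

theorem smulR (C : Type*) {V : Type*} [CommRing C] [Algebra ℝ C] [AddCommGroup V] [Module C V]
    [Module ℝ V] [IsScalarTower ℝ C V] (r : ℝ) (v : V) :
    r • v = (algebraMap ℝ C r) • v := (algebraMap_smul C r v).symm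

theorem nab_neg (M : AQH n C V) (X Y : V) : M.nab X (-Y) = -M.nab X Y := by
  have h0 : M.nab X 0 = 0 := by simpa using M.nab_add X 0 0
  have := M.nab_add X Y (-Y)
  rw [add_neg_cancel, h0] at this
  exact (neg_eq_of_add_eq_zero_right this.symm).symm

theorem D_sub (M : AQH n C V) (X : V) (f k : C) : M.D X (f - k) = M.D X f - M.D X k := by
  have := M.D_add X (f - k) k
  rw [sub_add_cancel] at this
  linear_combination -this

theorem g_Tvec (M : AQH n C V) {T : V → V → V → C} (h : L3 T) (X Y Z : V) :
    M.g Y (M.Tvec T X Z) = T Y X Z := by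
  unfold Tvec
  rw [(M.g_L1 Y).sum]
  simp only [M.g_symm Y]
  exact contr M (h.l1 X Z) Y

theorem nab2_omega (M : AQH n C V) (A : V → V) (X Y Z : V) :
    M.nab2 (M.omega A) X Y Z = M.g Y (M.nabA A X Z) := by
  simp only [nab2, omega, nabA, M.nab_metric, g_subr]
  ring

theorem nabA_quat {M : AQH n C V} {A B E : V → V} (q : Quat M A B E) {T : V → V → V → C}
    (h : L3 T) {γA γE : V → C}
    (hB : ∀ X Y, M.nabT T X (B Y) - B (M.nabT T X Y) = γA X • E Y - γE X • A Y) (X Y Z : V) :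
    M.g Y (M.nabA B X Z) = γA X * M.g Y (E Z) - γE X * M.g Y (A Z)
      + algebraMap ℝ C (1/2) * (T X Y (B Z) + T X (B Y) Z) := by
  have e := congrArg (M.g Y) (hB X Z)
  have sk : ∀ W, M.g Y (B W) = -M.g (B Y) W := fun W => by rw [q.skB, neg_neg]
  simp only [nabT, smulR C, q.addB, q.smulB, g_subr, g_addr, g_smulr, g_Tvec M h] at e
  simp only [nabA, g_subr]
  rw [sk (M.Tvec T X Z), g_Tvec M h, h.a12 X Y, h.a12 X (B Y)] at e
  linear_combination e

theorem tr_EB {M : AQH n C V} {A B E : V → V} (q : Quat M A B E) {T : V → V → V → C}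
    (h : L3 T) (X : V) :
    ∑ i, T X (E (M.frame i)) (B (M.frame i)) = ∑ i, T X (A (M.frame i)) (M.frame i) := by
  have := tr_both M q.cyc (b := fun Y Z => T X (A Y) Z)
    (fun Z => ⟨fun Y Y' => by rw [q.addA, (h.l2 _ _).add],
      fun f Y => by rw [q.smulA, (h.l2 _ _).smul]⟩) (fun Y => h.l3 _ _)
  simpa only [q.AB] using this

theorem inv_two_n (hn : 2 ≤ n) : algebraMap ℝ C (1/(2*(n:ℝ))) * (2 * (n : C)) = 1 := by
  have hn' : (n : ℝ) ≠ 0 := by positivity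
  rw [← map_ofNat (algebraMap ℝ C) 2, ← map_natCast (algebraMap ℝ C) n, ← map_mul, ← map_mul,
    ← map_one (algebraMap ℝ C)]
  congr 1
  field_simp

theorem lambda_eq (hn : 2 ≤ n) {M : AQH n C V} {A B E : V → V} (q : Quat M A B E)
    {T : V → V → V → C} (h : L3 T) {γA γE : V → C}
    (hB : ∀ X Y, M.nabT T X (B Y) - B (M.nabT T X Y) = γA X • E Y - γE X • A Y) (X : V) :
    (1/(2*(n:ℝ))) • M.inner2 (fun Y Z => M.nab2 (M.omega B) X Y Z) (M.omega E)
      = γA X + algebraMap ℝ C (1/(2*(n:ℝ))) * M.Lam A T X := by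
  have hc : ∀ j, ∑ i, M.g (M.frame i) (M.nabA B X (M.frame j)) *
      M.g (M.frame i) (E (M.frame j)) = M.g (E (M.frame j)) (M.nabA B X (M.frame j)) :=
    fun j => contr M (M.g_L1' _) _
  have hE : ∀ Y, M.g (E Y) (E Y) = M.g Y Y := fun Y => by
    rw [q.skE, q.EE, g_negr, neg_neg]
  have hA : ∀ Y, M.g (E Y) (A Y) = 0 := fun Y => by
    rw [q.skE, q.EA, g_diag q.skB, neg_zero]
  unfold inner2
  rw [Algebra.smul_def, Algebra.smul_def, Finset.sum_comm]
  simp only [nab2_omega]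
  unfold omega
  simp only [hc]
  simp only [nabA_quat q h hB, hE, hA, q.BE, M.frame_orthonormal, if_true, mul_one, mul_zero,
    sub_zero, Finset.sum_add_distrib, ← Finset.mul_sum, tr_EB q h, two_Lam M A h]
  simp only [Finset.sum_const, Finset.card_univ, Fintype.card_fin, nsmul_eq_mul]
  push_cast
  have h2 := half_mul (C := C)
  have hu := inv_two_n (C := C) hn
  set k := algebraMap ℝ C (1/2)
  set u := algebraMap ℝ C (1/(2*(n:ℝ)))
  linear_combination (u * 2 * n * γA X + u * M.Lam A T X * (2 * k + 1)) * h2 + γA X * hu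

theorem act_Lam {M : AQH n C V} {A B E : V → V} (q : Quat M A B E) {T : V → V → V → C}
    (h : L3 T) (hB : ∀ X Y Z, calL B T X Y Z = T X Y Z)
    (hE : ∀ X Y Z, calL E T X Y Z = T X Y Z) (X : V) :
    act1 A (act1 A (M.Lam A T)) X = -M.Lam A T X ∧
    act1 B (act1 A (M.Lam A T)) X = -M.Lam B T X ∧
    act1 E (act1 A (M.Lam A T)) X = -M.Lam E T X := by
  have hl := Lam_L1 M A h
  have hl' := Lam_L1 M E h
  simp only [act1, q.AA, q.AB, q.AE, hl.neg, neg_neg, true_and]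
  constructor
  · rw [Lam_rel q.cyc h hE X, neg_neg]
  · rw [Lam_rel q h hB (B X), q.BB, hl'.neg, neg_neg]

theorem xi_formula (hn : 2 ≤ n) (M : AQH n C V) {T : V → V → V → C} (h : L3 T)
    {γI γJ γK : V → C} (hq : M.QuatConn (M.nabT T) γI γJ γK) (X Y Z : V) :
    M.g Y (M.xi X Z) = algebraMap ℝ C (1/8) * (-3 * T X Y Z
        + (op23 M.I T X Y Z + op23 M.J T X Y Z + op23 M.K T X Y Z))
      + algebraMap ℝ C (1/(4*(n:ℝ))) * (M.Lam M.I T X * M.omega M.I Y Z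
        + M.Lam M.J T X * M.omega M.J Y Z + M.Lam M.K T X * M.omega M.K Y Z) := by
  obtain ⟨hI, hJ, hK⟩ := hq
  have q := M.quatIJK
  have lI : M.lambdaI X = _ := lambda_eq hn q h hJ X
  have lJ : M.lambdaJ X = _ := lambda_eq hn q.cyc h hK X
  have lK : M.lambdaK X = _ := lambda_eq hn q.cyc.cyc h hI X
  have sI : ∀ W, M.g Y (M.I W) = -M.g (M.I Y) W := fun W => by rw [q.skA, neg_neg]
  have sJ : ∀ W, M.g Y (M.J W) = -M.g (M.J Y) W := fun W => by rw [q.skB, neg_neg]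
  have sK : ∀ W, M.g Y (M.K W) = -M.g (M.K Y) W := fun W => by rw [q.skE, neg_neg]
  have eI := nabA_quat q.cyc.cyc h hI X (M.I Y) Z
  have eJ := nabA_quat q h hJ X (M.J Y) Z
  have eK := nabA_quat q.cyc h hK X (M.K Y) Z
  simp only [xi, smulR C, g_addr, g_smulr]
  rw [sI (M.nabA M.I X Z), sJ (M.nabA M.J X Z), sK (M.nabA M.K X Z), eI, eJ, eK, lI, lJ, lK]
  simp only [op23, omega, q.skA, q.skB, q.skE, q.AA, q.BB, q.EE, q.AB, q.BA, q.BE, q.EB, q.EA, q.AE,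
    g_negr, h.n2]
  have h2 := half_mul (C := C)
  have h4 : algebraMap ℝ C (-(1/4)) = -(algebraMap ℝ C (1/2) * algebraMap ℝ C (1/2)) := by
    rw [← map_mul, ← map_neg]; norm_num
  have h8 : algebraMap ℝ C (1/8) =
      algebraMap ℝ C (1/2) * algebraMap ℝ C (1/2) * algebraMap ℝ C (1/2) := by
    rw [← map_mul, ← map_mul]; norm_num
  have hu : algebraMap ℝ C (1/(4*(n:ℝ))) =
      algebraMap ℝ C (1/2) * algebraMap ℝ C (1/(2*(n:ℝ))) := by
    rw [← map_mul]
    congr 1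
    field_simp
    norm_num
  rw [h4, h8, hu]
  set k := algebraMap ℝ C (1/2)
  set u := algebraMap ℝ C (1/(2*(n:ℝ)))
  linear_combination (-k * (γI X * M.g Y (M.I Z) + γJ X * M.g Y (M.J Z) + γK X * M.g Y (M.K Z)))
    * h2

theorem nab4_Omega (M : AQH n C V) (X Y Z W U : V) :
    M.nab4 M.Omega4 X Y Z W U
      = 2 * (wedge22 (M.nab2 (M.omega M.I) X) (M.omega M.I) Y Z W U
        + wedge22 (M.nab2 (M.omega M.J) X) (M.omega M.J) Y Z W U
        + wedge22 (M.nab2 (M.omega M.K) X) (M.omega M.K) Y Z W U) := by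
  simp only [nab4, Omega4, wedge22, nab2, M.D_add, D_sub, M.D_mul]
  ring

/-- the derivation of `T` along `A` -/
def SA (T : V → V → V → C) (A : V → V) : V → V → V → C := fun X Y Z =>
  T X Y (A Z) + T X (A Y) Z

theorem nab4_Omega_T {M : AQH n C V} {T : V → V → V → C} (h : L3 T)
    {γI γJ γK : V → C} (hq : M.QuatConn (M.nabT T) γI γJ γK) (X Y Z W U : V) :
    M.nab4 M.Omega4 X Y Z W U
      = wedge22 (SA T M.I X) (M.omega M.I) Y Z W U
        + wedge22 (SA T M.J X) (M.omega M.J) Y Z W U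
        + wedge22 (SA T M.K X) (M.omega M.K) Y Z W U := by
  obtain ⟨hI, hJ, hK⟩ := hq
  have q := M.quatIJK
  rw [nab4_Omega]
  have eI : M.nab2 (M.omega M.I) X = fun Y Z => γK X * M.omega M.J Y Z - γJ X * M.omega M.K Y Z
      + algebraMap ℝ C (1/2) * SA T M.I X Y Z := by
    funext Y Z
    rw [nab2_omega, nabA_quat q.cyc.cyc h hI]; rfl
  have eJ : M.nab2 (M.omega M.J) X = fun Y Z => γI X * M.omega M.K Y Z - γK X * M.omega M.I Y Z
      + algebraMap ℝ C (1/2) * SA T M.J X Y Z := by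
    funext Y Z
    rw [nab2_omega, nabA_quat q h hJ]; rfl
  have eK : M.nab2 (M.omega M.K) X = fun Y Z => γJ X * M.omega M.I Y Z - γI X * M.omega M.J Y Z
      + algebraMap ℝ C (1/2) * SA T M.K X Y Z := by
    funext Y Z
    rw [nab2_omega, nabA_quat q.cyc h hK]; rfl
  rw [eI, eJ, eK]
  have h2 := half_mul (C := C)
  simp only [wedge22]
  generalize SA T M.I X = sI
  generalize SA T M.J X = sJ
  generalize SA T M.K X = sK
  generalize M.omega M.I = oI
  generalize M.omega M.J = oJ
  generalize M.omega M.K = oK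
  linear_combination (norm := (simp only [wedge22]; ring)) (wedge22 sI oI Y Z W U + wedge22 sJ oJ Y Z W U + wedge22 sK oK Y Z W U) * h2

theorem contr_S {M : AQH n C V} (A : V → V) {T : V → V → V → C}
    (h : L3 T) (X Y Z : V) :
    ∑ i, wedge22 (SA T A (M.frame i)) (M.omega A) (M.frame i) X Y Z
      = 2 * calL A T X Y Z - 2 * wedge12 (M.Lam A T) (M.omega A) X Y Z := by
  have hd : ∀ U W, T U U W = 0 := fun U W => by
    apply two_cancel
    linear_combination h.a12 U U W
  have t1 : ∀ X, ∑ i, SA T A (M.frame i) (M.frame i) X = -(2 * M.Lam A T X) := by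
    intro X
    rw [← two_Lam M A h, ← Finset.sum_neg_distrib]
    refine Finset.sum_congr rfl fun i _ => ?_
    simp only [SA, hd]
    rw [h.a23 (M.frame i) X, h.a12 X (M.frame i), h.a23 X (A (M.frame i)) (M.frame i)]
    ring
  have t2 : ∀ W X Y, ∑ i, SA T A (M.frame i) X Y * M.g (M.frame i) (A W) = SA T A (A W) X Y := by
    intro W X Y
    refine contr M (ν := fun U => SA T A U X Y) ⟨fun U U' => ?_, fun f U => ?_⟩ (A W)
    · simp only [SA, (h.l1 _ _).add]
      ring
    · simp only [SA, (h.l1 _ _).smul]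
      ring
  simp only [wedge22, Finset.sum_add_distrib, Finset.sum_sub_distrib, omega, ← Finset.sum_mul, t1,
    t2]
  simp only [SA, calL, op12, op13, op23, wedge12, omega]
  rw [h.a12 X (A Y) (A Z), h.a12 (A X) (A Y) Z, h.a12 X (A Z) (A Y), h.a23 X (A Y) (A Z),
    h.a12 (A X) (A Z) Y, h.a23 (A X) Y (A Z)]
  ring

theorem codiff_T {M : AQH n C V} {T : V → V → V → C} (h : L3 T)
    (hLI : ∀ X Y Z, calL M.I T X Y Z = T X Y Z) (hLJ : ∀ X Y Z, calL M.J T X Y Z = T X Y Z)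
    (hLK : ∀ X Y Z, calL M.K T X Y Z = T X Y Z)
    {γI γJ γK : V → C} (hq : M.QuatConn (M.nabT T) γI γJ γK) :
    M.codiff4 M.Omega4 = fun X Y Z => (-6) * T X Y Z +
      (-2) * psiG M M.I M.J M.K (act1 M.I (M.Lam M.I T)) X Y Z := by
  funext X Y Z
  have q := M.quatIJK
  have hl := act_Lam q h hLJ hLK
  simp only [codiff4, nab4_Omega_T h hq, Finset.sum_add_distrib, contr_S _ h, hLI, hLJ, hLK]
  simp only [psiG, wedge12, (hl _).1, (hl _).2.1, (hl _).2.2]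
  ring

theorem Lam_comb (M : AQH n C V) (A : V → V) (T S : V → V → V → C) (a b : C) (X : V) :
    M.Lam A (fun X Y Z => a * T X Y Z + b * S X Y Z) X = a * M.Lam A T X + b * M.Lam A S X := by
  simp only [Lam, Algebra.smul_def, add_mul, mul_assoc, Finset.sum_add_distrib, ← Finset.mul_sum]
  ring

theorem theta_T {M : AQH n C V} {T : V → V → V → C} (h : L3 T)
    (hLI : ∀ X Y Z, calL M.I T X Y Z = T X Y Z) (hLJ : ∀ X Y Z, calL M.J T X Y Z = T X Y Z)
    (hLK : ∀ X Y Z, calL M.K T X Y Z = T X Y Z)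
    {γI γJ γK : V → C} (hq : M.QuatConn (M.nabT T) γI γJ γK) (X : V) :
    M.thetaDOmega X = (4 * (n : C) - 4) * act1 M.I (M.Lam M.I T) X := by
  have q := M.quatIJK
  have hl := act_Lam q h hLJ hLK
  have hlL := Lam_L1 M M.I h
  have ht : L1 (act1 M.I (M.Lam M.I T)) := act1_L1 q.addA q.smulA hlL
  have pJ : ∀ X, M.Lam M.J (psiG M M.I M.J M.K (act1 M.I (M.Lam M.I T))) X
      = (2 * (n : C) + 1) * act1 M.J (act1 M.I (M.Lam M.I T)) X := fun X => by
    rw [← psiG_cyc]; exact psiG_Lam q.cyc ht X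
  have pK : ∀ X, M.Lam M.K (psiG M M.I M.J M.K (act1 M.I (M.Lam M.I T))) X
      = (2 * (n : C) + 1) * act1 M.K (act1 M.I (M.Lam M.I T)) X := fun X => by
    rw [← psiG_cyc, ← psiG_cyc]; exact psiG_Lam q.cyc.cyc ht X
  have nI : ∀ X, M.Lam M.I T X = -act1 M.I (act1 M.I (M.Lam M.I T)) X := fun X => by
    rw [(hl X).1, neg_neg]
  have nJ : ∀ X, M.Lam M.J T X = -act1 M.J (act1 M.I (M.Lam M.I T)) X := fun X => by
    rw [(hl X).2.1, neg_neg]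
  have nK : ∀ X, M.Lam M.K T X = -act1 M.K (act1 M.I (M.Lam M.I T)) X := fun X => by
    rw [(hl X).2.2, neg_neg]
  have eI : ∀ X, M.Lam M.I (M.codiff4 M.Omega4) X
      = (4 - 4 * (n : C)) * act1 M.I (act1 M.I (M.Lam M.I T)) X := fun X => by
    rw [codiff_T h hLI hLJ hLK hq, Lam_comb, psiG_Lam q ht]
    linear_combination (-6) * nI X
  have eJ : ∀ X, M.Lam M.J (M.codiff4 M.Omega4) X
      = (4 - 4 * (n : C)) * act1 M.J (act1 M.I (M.Lam M.I T)) X := fun X => by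
    rw [codiff_T h hLI hLJ hLK hq, Lam_comb, pJ]
    linear_combination (-6) * nJ X
  have eK : ∀ X, M.Lam M.K (M.codiff4 M.Omega4) X
      = (4 - 4 * (n : C)) * act1 M.K (act1 M.I (M.Lam M.I T)) X := fun X => by
    rw [codiff_T h hLI hLJ hLK hq, Lam_comb, pK]
    linear_combination (-6) * nK X
  have h3 : algebraMap ℝ C (1/3) * 3 = 1 := by
    rw [← map_ofNat (algebraMap ℝ C) 3, ← map_mul, ← map_one (algebraMap ℝ C)]; norm_num
  unfold thetaDOmega
  generalize M.codiff4 M.Omega4 = Q at *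
  generalize act1 M.I (M.Lam M.I T) = t at *
  have aI : act1 M.I (M.Lam M.I Q) X = (4 * (n : C) - 4) * t X := by
    simp only [act1, eI, q.AA, ht.neg]
    ring
  have aJ : act1 M.J (M.Lam M.J Q) X = (4 * (n : C) - 4) * t X := by
    simp only [act1, eJ, q.BB, ht.neg]
    ring
  have aK : act1 M.K (M.Lam M.K Q) X = (4 * (n : C) - 4) * t X := by
    simp only [act1, eK, q.EE, ht.neg]
    ring
  rw [aI, aJ, aK, Algebra.smul_def]
  linear_combination ((4 * (n : C) - 4) * t X) * h3

theorem T_formula (hn : 2 ≤ n) {M : AQH n C V} {T : V → V → V → C} (h : L3 T)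
    (hLI : ∀ X Y Z, calL M.I T X Y Z = T X Y Z) (hLJ : ∀ X Y Z, calL M.J T X Y Z = T X Y Z)
    (hLK : ∀ X Y Z, calL M.K T X Y Z = T X Y Z)
    {γI γJ γK : V → C} (hq : M.QuatConn (M.nabT T) γI γJ γK) (X Y Z : V) :
    T X Y Z =
      (-(1/6:ℝ)) • M.codiff4 M.Omega4 X Y Z
        - (1/(12*((n:ℝ)-1))) •
          (wedge12 (act1 M.I M.thetaDOmega) (M.omega M.I) X Y Z
            + wedge12 (act1 M.J M.thetaDOmega) (M.omega M.J) X Y Z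
            + wedge12 (act1 M.K M.thetaDOmega) (M.omega M.K) X Y Z) := by
  have hth : M.thetaDOmega = fun X => (4 * (n : C) - 4) * act1 M.I (M.Lam M.I T) X :=
    funext (theta_T h hLI hLJ hLK hq)
  rw [hth, codiff_T h hLI hLJ hLK hq]
  generalize act1 M.I (M.Lam M.I T) = t
  simp only [Algebra.smul_def]
  have h6 : algebraMap ℝ C (-(1/6)) * 6 = -1 := by
    rw [← map_ofNat (algebraMap ℝ C) 6, ← map_mul, ← map_one (algebraMap ℝ C), ← map_neg]
    norm_num
  have hn' : (n : ℝ) - 1 ≠ 0 := by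
    have : (2 : ℝ) ≤ n := by exact_mod_cast hn
    linarith
  have h12 : algebraMap ℝ C (1/(12*((n:ℝ)-1))) * (12 * ((n : C) - 1)) = 1 := by
    rw [← map_ofNat (algebraMap ℝ C) 12, ← map_natCast (algebraMap ℝ C) n,
      ← map_one (algebraMap ℝ C), ← map_sub, ← map_mul, ← map_mul]
    congr 1
    field_simp
  apply three_cancel
  simp only [psiG, wedge12, act1]
  generalize algebraMap ℝ C (-(1/6)) = k at *
  generalize algebraMap ℝ C (1/(12*((n:ℝ)-1))) = c at *
  linear_combination (norm := (simp only [psiG, wedge12, act1]; ring)) (3 * T X Y Z + psiG M M.I M.J M.K t X Y Z) * h6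
    + psiG M M.I M.J M.K t X Y Z * h12

end qktproof2

end AQH

namespace AQH

section qktproof3

set_option linter.unusedSectionVars false
set_option linter.unusedSimpArgs false

variable {n : ℕ} {C V : Type*} [CommRing C] [Algebra ℝ C] [AddCommGroup V] [Module C V]
  [Module ℝ V] [IsScalarTower ℝ C V]

theorem contr_EH (M : AQH n C V) {A : V → V} (addA : ∀ X Y, A (X + Y) = A X + A Y)
    (smulA : ∀ (f : C) X, A (f • X) = f • A X) (X Y Z : V) (a b : C) :
    ∑ i, M.g (M.frame i) X * (M.g (A (M.frame i)) Y * a - M.g (A (M.frame i)) Z * b)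
      = M.g (A X) Y * a - M.g (A X) Z * b := by
  have := contr M (ν := fun W => M.g (A W) Y * a - M.g (A W) Z * b)
    ⟨fun U W => by simp only [addA, M.g_add]; ring,
      fun f U => by simp only [smulA, M.g_smul]; ring⟩ X
  rw [← this]
  exact Finset.sum_congr rfl fun i _ => mul_comm _ _

theorem xiEH3_eq (M : AQH n C V) {θ : V → C} (h : L1 θ) (X Y Z : V) :
    M.xiEH3 θ X Y Z = 3 * psiG M M.I M.J M.K θ X Y Z
      - (op23 M.I (psiG M M.I M.J M.K θ) X Y Z + op23 M.J (psiG M M.I M.J M.K θ) X Y Z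
        + op23 M.K (psiG M M.I M.J M.K θ) X Y Z)
      - (4 + algebraMap ℝ C (2/(n:ℝ))) * (act1 M.I θ X * M.omega M.I Y Z
        + act1 M.J θ X * M.omega M.J Y Z + act1 M.K θ X * M.omega M.K Y Z) := by
  have q := M.quatIJK
  have e0 := contr_EH M (A := fun X : V => X) (fun _ _ => rfl) (fun _ _ => rfl) X Y Z (θ Z) (θ Y)
  rw [psiG_P q h]
  unfold xiEH3
  rw [e0, contr_EH M q.addA q.smulA, contr_EH M q.addB q.smulB, contr_EH M q.addE q.smulE]
  simp only [Algebra.smul_def, map_ofNat, omega, q.skA, q.skB, q.skE]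
  ring

theorem metric_nabT (M : AQH n C V) {T : V → V → V → C} (h : L3 T) :
    M.MetricConn (M.nabT T) := by
  intro X Y Z
  simp only [nabT, smulR C, g_addr, M.g_add, g_smulr, M.g_smul, g_Tvec M h]
  rw [M.g_symm (M.Tvec T X Y) Z, g_Tvec M h, M.nab_metric]
  rw [h.a12 X Z Y, h.a12 X Y Z, h.a23 X Y Z]
  ring

/-- cyclic version of the intrinsic torsion -/
def xiG (M : AQH n C V) (A B E : V → V) (lA lB lE : V → C) : V → V → V := fun X Y =>
  (-(1/4 : ℝ)) • (A (M.nabA A X Y) + B (M.nabA B X Y) + E (M.nabA E X Y))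
    + (1/2 : ℝ) • (lA X • A Y + lB X • B Y + lE X • E Y)

theorem xiG_cyc (M : AQH n C V) (A B E : V → V) (lA lB lE : V → C) (X Y : V) :
    xiG M B E A lB lE lA X Y = xiG M A B E lA lB lE X Y := by
  simp only [xiG]
  congr 2 <;> abel

theorem xi_comm {M : AQH n C V} {A B E : V → V} (q : Quat M A B E) (lA lB lE : V → C)
    (W X Y : V) :
    M.g W (M.nabA A X Y) + M.g W (xiG M A B E lA lB lE X (A Y))
        - M.g W (A (xiG M A B E lA lB lE X Y))
      = lE X * M.g W (B Y) - lB X * M.g W (E Y) := by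
  have subA : ∀ U U', A (U - U') = A U - A U' := fun U U' => by
    rw [sub_eq_add_neg, q.addA, q.negA, sub_eq_add_neg]
  have subB : ∀ U U', B (U - U') = B U - B U' := fun U U' => by
    rw [sub_eq_add_neg, q.addB, q.negB, sub_eq_add_neg]
  have subE : ∀ U U', E (U - U') = E U - E U' := fun U U' => by
    rw [sub_eq_add_neg, q.addE, q.negE, sub_eq_add_neg]
  simp only [xiG, nabA, smulR C, subA, subB, subE, q.addA, q.smulA, q.AA, q.BB, q.EE, q.AB, q.BA,
    q.BE, q.EB, q.EA, q.AE, nab_neg, q.negA, q.negB, q.negE, g_addr, g_subr, g_smulr, g_negr]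
  have h2 := half_mul (C := C)
  have h4 : algebraMap ℝ C (-(1/4)) = -(algebraMap ℝ C (1/2) * algebraMap ℝ C (1/2)) := by
    rw [← map_mul, ← map_neg]; norm_num
  rw [h4]
  set k := algebraMap ℝ C (1/2)
  linear_combination ((2 * k + 1) * (M.g W (A (M.nab X Y)) - M.g W (M.nab X (A Y)))
    + lE X * M.g W (B Y) - lB X * M.g W (E Y)) * h2

theorem quat_of_xi {M : AQH n C V} {A B E : V → V} (q : Quat M A B E) {T : V → V → V → C}
    (h : L3 T) (lA lB lE : V → C) (θ : V → C) (w : C)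
    (hx : ∀ X Y Z, M.g Y (xiG M A B E lA lB lE X Z) = algebraMap ℝ C (1/8) * (-3 * T X Y Z
        + (op23 A T X Y Z + op23 B T X Y Z + op23 E T X Y Z))
      - w * (act1 A θ X * M.omega A Y Z + act1 B θ X * M.omega B Y Z + act1 E θ X * M.omega E Y Z))
    (X Y : V) :
    M.nabT T X (A Y) - A (M.nabT T X Y)
      = (lE X + 2 * w * act1 E θ X) • B Y - (lB X + 2 * w * act1 B θ X) • E Y := by
  apply M.g_ext
  intro W
  have sk : ∀ U, M.g W (A U) = -M.g (A W) U := fun U => by rw [q.skA, neg_neg]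
  have e := xi_comm q lA lB lE W X Y
  rw [sk (xiG M A B E lA lB lE X Y), hx, hx] at e
  simp only [nabT, smulR C, q.addA, q.smulA, g_subr, g_addr, g_smulr, g_Tvec M h]
  rw [sk (M.Tvec T X Y), g_Tvec M h, h.a12 X W, h.a12 X (A W)]
  simp only [nabA, g_subr, op23, omega, q.skA, q.AA, q.BA, q.EA, q.AB, q.AE, h.n2, h.n3,
    g_negr] at e
  have h2 := half_mul (C := C)
  have h8 : algebraMap ℝ C (1/8) =
      algebraMap ℝ C (1/2) * algebraMap ℝ C (1/2) * algebraMap ℝ C (1/2) := by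
    rw [← map_mul, ← map_mul]; norm_num
  rw [h8] at e
  set k := algebraMap ℝ C (1/2)
  linear_combination e + k * (2 * k + 1) * (T X W (A Y) + T X (A W) Y) * h2

theorem calL_comb (A : V → V) {T S : V → V → V → C} (a b : C)
    (hT : ∀ X Y Z, calL A T X Y Z = T X Y Z) (hS : ∀ X Y Z, calL A S X Y Z = S X Y Z)
    (X Y Z : V) : calL A (fun X Y Z => a * T X Y Z + b * S X Y Z) X Y Z
      = a * T X Y Z + b * S X Y Z := by
  have h1 := hT X Y Z
  have h2 := hS X Y Z
  simp only [calL, op12, op13, op23] at *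
  linear_combination a * h1 + b * h2

theorem psiG_calL3 (M : AQH n C V) {θ : V → C} (h : L1 θ) :
    (∀ X Y Z, calL M.I (psiG M M.I M.J M.K θ) X Y Z = psiG M M.I M.J M.K θ X Y Z) ∧
    (∀ X Y Z, calL M.J (psiG M M.I M.J M.K θ) X Y Z = psiG M M.I M.J M.K θ X Y Z) ∧
    (∀ X Y Z, calL M.K (psiG M M.I M.J M.K θ) X Y Z = psiG M M.I M.J M.K θ X Y Z) := by
  have q := M.quatIJK
  refine ⟨psiG_calL q h, ?_, ?_⟩
  · rw [← psiG_cyc]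
    exact psiG_calL q.cyc h
  · rw [← psiG_cyc, ← psiG_cyc]
    exact psiG_calL q.cyc.cyc h

theorem psiG_Lam3 (M : AQH n C V) {θ : V → C} (h : L1 θ) (X : V) :
    M.Lam M.I (psiG M M.I M.J M.K θ) X = (2 * (n : C) + 1) * act1 M.I θ X ∧
    M.Lam M.J (psiG M M.I M.J M.K θ) X = (2 * (n : C) + 1) * act1 M.J θ X ∧
    M.Lam M.K (psiG M M.I M.J M.K θ) X = (2 * (n : C) + 1) * act1 M.K θ X := by
  have q := M.quatIJK
  refine ⟨psiG_Lam q h X, ?_, ?_⟩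
  · rw [← psiG_cyc]
    exact psiG_Lam q.cyc h X
  · rw [← psiG_cyc, ← psiG_cyc]
    exact psiG_Lam q.cyc.cyc h X

theorem eighth_mul : algebraMap ℝ C (1/8) * 8 = 1 := by
  rw [← map_ofNat (algebraMap ℝ C) 8, ← map_mul, ← map_one (algebraMap ℝ C)]; norm_num

theorem QKT_of_KEH {M : AQH n C V} (H : M.inKEH) : ∃ T : V → V → V → C, M.QKTtorsion T := by
  obtain ⟨ψ, θ, ⟨ha, hl, cI, cJ, cK, -, -, -⟩, hθ, hx⟩ := H
  have q := M.quatIJK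
  have hψ := L3.of ha hl
  have hθ' := L1.ofLin hθ
  have hE := psiG_L3 q hθ'
  obtain ⟨pI, pJ, pK⟩ := psiG_calL3 M hθ'
  have cI' : ∀ X Y Z, calL M.I ψ X Y Z = ψ X Y Z := fun X Y Z => by rw [cI]
  have cJ' : ∀ X Y Z, calL M.J ψ X Y Z = ψ X Y Z := fun X Y Z => by rw [cJ]
  have cK' : ∀ X Y Z, calL M.K ψ X Y Z = ψ X Y Z := fun X Y Z => by rw [cK]
  let T : V → V → V → C := fun X Y Z => (-8) * ψ X Y Z + (-8) * psiG M M.I M.J M.K θ X Y Z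
  have hT : L3 T := (hψ.smul (-8)).add (hE.smul (-8))
  have h8 := eighth_mul (C := C)
  have hx0 : ∀ X Y Z, M.g Y (M.xi X Z) = algebraMap ℝ C (1/8) * (-3 * T X Y Z
        + (op23 M.I T X Y Z + op23 M.J T X Y Z + op23 M.K T X Y Z))
      - (4 + algebraMap ℝ C (2/(n:ℝ))) * (act1 M.I θ X * M.omega M.I Y Z
        + act1 M.J θ X * M.omega M.J Y Z + act1 M.K θ X * M.omega M.K Y Z) := by
    intro X Y Z
    rw [hx, xiEH3_eq M hθ']
    simp only [xiKH3, Algebra.smul_def, map_ofNat, op23, T]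
    generalize psiG M M.I M.J M.K θ = P
    linear_combination (-(3 * ψ X Y Z + 3 * P X Y Z - ψ X (M.I Y) (M.I Z) - ψ X (M.J Y) (M.J Z)
      - ψ X (M.K Y) (M.K Z) - P X (M.I Y) (M.I Z) - P X (M.J Y) (M.J Z)
      - P X (M.K Y) (M.K Z))) * h8
  have x1 : ∀ X Z, xiG M M.I M.J M.K M.lambdaI M.lambdaJ M.lambdaK X Z = M.xi X Z :=
    fun X Z => rfl
  have x2 : ∀ X Z, xiG M M.J M.K M.I M.lambdaJ M.lambdaK M.lambdaI X Z = M.xi X Z :=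
    fun X Z => by rw [xiG_cyc, x1]
  have x3 : ∀ X Z, xiG M M.K M.I M.J M.lambdaK M.lambdaI M.lambdaJ X Z = M.xi X Z :=
    fun X Z => by rw [xiG_cyc, x2]
  refine ⟨T, hT.isAlt, hT.lin, ?_, metric_nabT M hT, ?_⟩
  · intro X Y Z
    rw [calL_comb M.I (-8) (-8) cI' pI, calL_comb M.J (-8) (-8) cJ' pJ,
      calL_comb M.K (-8) (-8) cK' pK, Algebra.smul_def, map_ofNat]
    ring
  · refine ⟨fun X => M.lambdaI X + 2 * (4 + algebraMap ℝ C (2/(n:ℝ))) * act1 M.I θ X,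
      fun X => M.lambdaJ X + 2 * (4 + algebraMap ℝ C (2/(n:ℝ))) * act1 M.J θ X,
      fun X => M.lambdaK X + 2 * (4 + algebraMap ℝ C (2/(n:ℝ))) * act1 M.K θ X, ?_, ?_, ?_⟩
    · refine quat_of_xi q hT M.lambdaI M.lambdaJ M.lambdaK θ _ fun X Y Z => ?_
      rw [x1, hx0]
    · refine quat_of_xi q.cyc hT M.lambdaJ M.lambdaK M.lambdaI θ _ fun X Y Z => ?_
      rw [x2, hx0]
      ring
    · refine quat_of_xi q.cyc.cyc hT M.lambdaK M.lambdaI M.lambdaJ θ _ fun X Y Z => ?_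
      rw [x3, hx0]
      ring

/-- unpacked torsion data -/
theorem QKT_unpack {M : AQH n C V} {T : V → V → V → C} (H : M.QKTtorsion T) :
    L3 T ∧ (∀ X Y Z, calL M.I T X Y Z = T X Y Z) ∧ (∀ X Y Z, calL M.J T X Y Z = T X Y Z) ∧
    (∀ X Y Z, calL M.K T X Y Z = T X Y Z) ∧
    ∃ γI γJ γK : V → C, M.QuatConn (M.nabT T) γI γJ γK := by
  obtain ⟨ha, hl, hL, -, hq⟩ := H
  have q := M.quatIJK
  have h := L3.of ha hl
  have hL' : ∀ X Y Z, calL M.I T X Y Z + calL M.J T X Y Z + calL M.K T X Y Z = 3 * T X Y Z := by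
    intro X Y Z
    rw [hL, Algebra.smul_def, map_ofNat]
  refine ⟨h, calL_split q h hL', calL_split q.cyc h fun X Y Z => ?_,
    calL_split q.cyc.cyc h fun X Y Z => ?_, hq⟩
  · rw [← hL']; ring
  · rw [← hL']; ring

theorem KEH_of_QKT (hn : 2 ≤ n) {M : AQH n C V} {T : V → V → V → C} (H : M.QKTtorsion T) :
    M.inKEH := by
  obtain ⟨h, hLI, hLJ, hLK, γI, γJ, γK, hq⟩ := QKT_unpack H
  have q := M.quatIJK
  have hl := act_Lam q h hLJ hLK
  have ht : L1 (act1 M.I (M.Lam M.I T)) := act1_L1 q.addA q.smulA (Lam_L1 M M.I h)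
  have hx := xi_formula hn M h hq
  have nI : ∀ X, M.Lam M.I T X = -act1 M.I (act1 M.I (M.Lam M.I T)) X := fun X => by
    rw [(hl X).1, neg_neg]
  have nJ : ∀ X, M.Lam M.J T X = -act1 M.J (act1 M.I (M.Lam M.I T)) X := fun X => by
    rw [(hl X).2.1, neg_neg]
  have nK : ∀ X, M.Lam M.K T X = -act1 M.K (act1 M.I (M.Lam M.I T)) X := fun X => by
    rw [(hl X).2.2, neg_neg]
  have hpos : (0 : ℝ) < n := by
    have : (2 : ℝ) ≤ n := by exact_mod_cast hn
    linarith
  have hv : algebraMap ℝ C (1/(2*(n:ℝ)+1)) * (2 * (n : C) + 1) = 1 := by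
    rw [← map_ofNat (algebraMap ℝ C) 2, ← map_natCast (algebraMap ℝ C) n,
      ← map_one (algebraMap ℝ C), ← map_mul, ← map_add, ← map_mul]
    congr 1
    field_simp
  have h8 := eighth_mul (C := C)
  have hw : algebraMap ℝ C (1/8) * algebraMap ℝ C (1/(2*(n:ℝ)+1))
      * (4 + algebraMap ℝ C (2/(n:ℝ))) = algebraMap ℝ C (1/(4*(n:ℝ))) := by
    rw [← map_ofNat (algebraMap ℝ C) 4, ← map_add, ← map_mul, ← map_mul]
    congr 1
    field_simp
    ring
  generalize act1 M.I (M.Lam M.I T) = t at *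
  generalize algebraMap ℝ C (1/(2*(n:ℝ)+1)) = v at *
  let θ : V → C := fun X => algebraMap ℝ C (1/8) * v * t X
  have hθ : L1 θ := ⟨fun X Y => by simp only [θ, ht.add]; ring,
    fun f X => by simp only [θ, ht.smul]; ring⟩
  have hE := psiG_L3 q hθ
  obtain ⟨pI, pJ, pK⟩ := psiG_calL3 M hθ
  have hLam := psiG_Lam3 M hθ
  let ψ : V → V → V → C := fun X Y Z => (-algebraMap ℝ C (1/8)) * T X Y Z
    + (-1) * psiG M M.I M.J M.K θ X Y Z
  have hψ : L3 ψ := (h.smul _).add (hE.smul (-1))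
  refine ⟨ψ, θ, ⟨hψ.isAlt, hψ.lin, ?_, ?_, ?_, ?_, ?_, ?_⟩, hθ.toLin, ?_⟩
  · funext X Y Z
    exact calL_comb M.I _ _ hLI pI X Y Z
  · funext X Y Z
    exact calL_comb M.J _ _ hLJ pJ X Y Z
  · funext X Y Z
    exact calL_comb M.K _ _ hLK pK X Y Z
  · funext X
    show M.Lam M.I (fun X Y Z => _) X = 0
    rw [Lam_comb, (hLam X).1, nI]
    simp only [act1, θ]
    linear_combination (algebraMap ℝ C (1/8) * t (M.I X)) * hv
  · funext X
    show M.Lam M.J (fun X Y Z => _) X = 0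
    rw [Lam_comb, (hLam X).2.1, nJ]
    simp only [act1, θ]
    linear_combination (algebraMap ℝ C (1/8) * t (M.J X)) * hv
  · funext X
    show M.Lam M.K (fun X Y Z => _) X = 0
    rw [Lam_comb, (hLam X).2.2, nK]
    simp only [act1, θ]
    linear_combination (algebraMap ℝ C (1/8) * t (M.K X)) * hv
  · intro X Y Z
    rw [hx, xiEH3_eq M hθ, nI, nJ, nK, ← hw]
    simp only [xiKH3, Algebra.smul_def, map_ofNat, op23, ψ]
    generalize psiG M M.I M.J M.K θ = P
    simp only [act1, θ]
    ring

end qktproof3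

end AQH

open AQH in
/-- An almost quaternion-Hermitian manifold `M` of dimension
`4n ≥ 8` is QKT (its intrinsic torsion lies in `(K+E)H`) iff there is a metric
quaternionic connection `∇^QKT = ∇ + (1/2)T` whose torsion `T` is a
skew-symmetric three-form in the `+3`-eigenspace of `𝓛`.  When `M` is QKT,
`∇^QKT` is the unique such connection, the intrinsic torsion is
`⟨Y, ξ_X Z⟩ = (-(3/8)T + (1/8)Σ_A A_(23)T - (1/4n)Σ_A A t ⊗ ω_A)(X,Y,Z)` with
`t = IΛ_I T`, and `T = -(1/6) d*Ω - (1/(12(n-1))) Σ_A Aθ^{d*Ω} ∧ ω_A`. -/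
theorem statement14 {n : ℕ} {C V : Type*} [CommRing C] [Algebra ℝ C] [AddCommGroup V]
    [Module C V] [Module ℝ V] [IsScalarTower ℝ C V]
    (hn : 2 ≤ n) (M : AQH n C V) :
    (M.inKEH ↔ ∃ T : V → V → V → C, M.QKTtorsion T) ∧
    (M.inKEH →
      -- uniqueness of the `Sp(n)Sp(1)`-connection with skew-symmetric torsion
      (∀ T T' : V → V → V → C, M.QKTtorsion T → M.QKTtorsion T' → T = T') ∧
      -- the intrinsic torsion and the torsion form of a QKT structure
      (∀ T : V → V → V → C, M.QKTtorsion T →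
        (∀ X Y Z, M.g Y (M.xi X Z) =
          (-(3/8:ℝ)) • T X Y Z
            + (1/8:ℝ) • (op23 M.I T X Y Z + op23 M.J T X Y Z + op23 M.K T X Y Z)
            - (1/(4*(n:ℝ))) •
              (act1 M.I (act1 M.I (M.Lam M.I T)) X * M.omega M.I Y Z
                + act1 M.J (act1 M.I (M.Lam M.I T)) X * M.omega M.J Y Z
                + act1 M.K (act1 M.I (M.Lam M.I T)) X * M.omega M.K Y Z)) ∧
        (∀ X Y Z, T X Y Z =
          (-(1/6:ℝ)) • M.codiff4 M.Omega4 X Y Z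
            - (1/(12*((n:ℝ)-1))) •
              (wedge12 (act1 M.I M.thetaDOmega) (M.omega M.I) X Y Z
                + wedge12 (act1 M.J M.thetaDOmega) (M.omega M.J) X Y Z
                + wedge12 (act1 M.K M.thetaDOmega) (M.omega M.K) X Y Z)))) := by
  refine ⟨⟨fun H => QKT_of_KEH H, fun ⟨T, H⟩ => KEH_of_QKT hn H⟩, fun _ => ⟨?_, ?_⟩⟩
  · intro T T' H H'
    obtain ⟨h, hLI, hLJ, hLK, γI, γJ, γK, hq⟩ := QKT_unpack H
    obtain ⟨h', hLI', hLJ', hLK', γI', γJ', γK', hq'⟩ := QKT_unpack H'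
    funext X Y Z
    rw [T_formula hn h hLI hLJ hLK hq X Y Z, T_formula hn h' hLI' hLJ' hLK' hq' X Y Z]
  · intro T H
    obtain ⟨h, hLI, hLJ, hLK, γI, γJ, γK, hq⟩ := QKT_unpack H
    refine ⟨fun X Y Z => ?_, T_formula hn h hLI hLJ hLK hq⟩
    have hl := act_Lam M.quatIJK h hLJ hLK X
    rw [xi_formula hn M h hq, hl.1, hl.2.1, hl.2.2]
    have h3 : algebraMap ℝ C (-(3/8)) = -3 * algebraMap ℝ C (1/8) := by
      rw [← map_ofNat (algebraMap ℝ C) 3, ← map_neg, ← map_mul]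
      norm_num
    simp only [Algebra.smul_def, h3]
    ring
end
end

section
/- Any compatible Riemannian metric on an eight-dimensional quaternionic manifold gives a QKT structure: if M is an 8-manifold with an almost quaternionic structure 𝒢 admitting a torsion-free quaternionic connection, then for any Riemannian metric g compatible with 𝒢 the resulting almost quaternion-Hermitian manifold has intrinsic torsion in (K+E)H. -/
/-!  Synthetic (Koszul-style) model of an almost quaternion-Hermitian `4n`-manifold.

`C` plays the role of the commutative ℝ-algebra of smooth functions and `V` that of
the `C`-module of vector fields, equipped with a directional derivative `D`, a Lie
bracket, a Riemannian metric `g` together with its Levi-Civita connection `nab`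
(characterised by being torsion-free and metric), a local adapted basis `I, J, K`
of anticommuting almost complex structures with `K = I J`, each compatible with the
metric, and a (local) orthonormal frame.  -/

noncomputable section

open scoped BigOperators

namespace QKT

set_option linter.unusedSectionVars false
set_option linter.unusedSimpArgs false

variable {C V : Type*} [CommRing C] [Algebra ℝ C] [AddCommGroup V] [Module C V]

/-- quaternionic-Hermitian linear algebra with an orthonormal frame of eight vectors -/
structure QH (I J K : V →ₗ[C] V) (g : V →ₗ[C] V →ₗ[C] C) (e : Fin (4 * 2) → V) : Prop where
  II : ∀ X, I (I X) = -X
  JJ : ∀ X, J (J X) = -X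
  KK : ∀ X, K (K X) = -X
  IJ : ∀ X, I (J X) = K X
  JI : ∀ X, J (I X) = -K X
  JK : ∀ X, J (K X) = I X
  KJ : ∀ X, K (J X) = -I X
  KI : ∀ X, K (I X) = J X
  IK : ∀ X, I (K X) = -J X
  symm : ∀ X Y, g X Y = g Y X
  gI : ∀ X Y, g (I X) Y = -g X (I Y)
  gJ : ∀ X Y, g (J X) Y = -g X (J Y)
  gK : ∀ X Y, g (K X) Y = -g X (K Y)
  on : ∀ i j, g (e i) (e j) = if i = j then 1 else 0
  span : ∀ X, X = ∑ i, g X (e i) • e i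

/-- symmetric Hermitian in the last two slots -/
structure Herm (I J K : V →ₗ[C] V) (k : V →ₗ[C] V →ₗ[C] V →ₗ[C] C) : Prop where
  symm : ∀ X Y Z, k X Y Z = k X Z Y
  hI : ∀ X Y Z, k X Y (I Z) = -k X (I Y) Z
  hJ : ∀ X Y Z, k X Y (J Z) = -k X (J Y) Z
  hK : ∀ X Y Z, k X Y (K Z) = -k X (K Y) Z

variable {I J K : V →ₗ[C] V} {g : V →ₗ[C] V →ₗ[C] C} {e : Fin (4 * 2) → V}

theorem QH.cyc (h : QH I J K g e) : QH J K I g e :=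
  ⟨h.JJ, h.KK, h.II, h.JK, h.KJ, h.KI, h.IK, h.IJ, h.JI, h.symm, h.gJ, h.gK, h.gI, h.on, h.span⟩

theorem Herm.cyc {k : V →ₗ[C] V →ₗ[C] V →ₗ[C] C} (h : Herm I J K k) : Herm J K I k :=
  ⟨h.symm, h.hJ, h.hK, h.hI⟩

theorem nat_cancel (n : ℕ) (hn : n ≠ 0) (x : C) (h : (n : C) * x = 0) : x = 0 := by
  have h2 : ((n : ℝ)⁻¹ * (n : ℝ)) • x = 0 := by
    rw [mul_smul]
    have : (n : ℝ) • x = 0 := by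
      rw [Algebra.smul_def, map_natCast, h]
    rw [this, smul_zero]
  rwa [inv_mul_cancel₀ (by exact_mod_cast hn), one_smul] at h2

theorem two_cancel (x : C) (h : 2 * x = 0) : x = 0 := nat_cancel 2 (by norm_num) x (by simpa using h)

theorem self_neg (x : C) (h : x = -x) : x = 0 := two_cancel x (by linear_combination h)

/-- build a trilinear map from a function -/
def mkTri (T : V → V → V → C)
    (a1 : ∀ X X' Y Z, T (X + X') Y Z = T X Y Z + T X' Y Z)
    (s1 : ∀ (f : C) X Y Z, T (f • X) Y Z = f * T X Y Z)
    (a2 : ∀ X Y Y' Z, T X (Y + Y') Z = T X Y Z + T X Y' Z)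
    (s2 : ∀ (f : C) X Y Z, T X (f • Y) Z = f * T X Y Z)
    (a3 : ∀ X Y Z Z', T X Y (Z + Z') = T X Y Z + T X Y Z')
    (s3 : ∀ (f : C) X Y Z, T X Y (f • Z) = f * T X Y Z) : V →ₗ[C] V →ₗ[C] V →ₗ[C] C where
  toFun X := LinearMap.mk₂ C (T X) (a2 X) (fun f Y Z => s2 f X Y Z) (a3 X) (fun f Y Z => s3 f X Y Z)
  map_add' X X' := by ext Y Z; simp [a1]
  map_smul' f X := by ext Y Z; simp [s1]

@[simp] theorem mkTri_apply (T : V → V → V → C) (a1 s1 a2 s2 a3 s3) (X Y Z : V) :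
    mkTri T a1 s1 a2 s2 a3 s3 X Y Z = T X Y Z := rfl

/-! ### vanishing of the S³H part -/

section S3H

variable (s : V →ₗ[C] V →ₗ[C] V →ₗ[C] C)

/-- four times the `I`-component -/
def HT (s : V →ₗ[C] V →ₗ[C] V →ₗ[C] C) (I J K : V →ₗ[C] V) : V →ₗ[C] V →ₗ[C] V →ₗ[C] C :=
  mkTri (fun X Y Z => s X Y (I Z) - s X (I Y) Z + s X (J Y) (K Z) - s X (K Y) (J Z))
    (by intros; simp only [map_add, LinearMap.add_apply]; ring)
    (by intros; simp only [map_smul, LinearMap.smul_apply, smul_eq_mul]; ring)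
    (by intros; simp only [map_add, LinearMap.add_apply]; ring)
    (by intros; simp only [map_smul, LinearMap.smul_apply, smul_eq_mul]; ring)
    (by intros; simp only [map_add, LinearMap.add_apply]; ring)
    (by intros; simp only [map_smul, LinearMap.smul_apply, smul_eq_mul]; ring)

theorem HT_apply (X Y Z : V) :
    HT s I J K X Y Z = s X Y (I Z) - s X (I Y) Z + s X (J Y) (K Z) - s X (K Y) (J Z) := rfl

/-- the symmetric part commutes with `A` -/
def SymComm (s : V →ₗ[C] V →ₗ[C] V →ₗ[C] C) (A : V →ₗ[C] V) : Prop :=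
  ∀ X Y Z, s X (A Y) Z + s X Y (A Z) + s X (A Z) Y + s X Z (A Y) = 0

theorem HT_herm (h : QH I J K g e) (cI : SymComm s I) (cJ : SymComm s J) :
    Herm I J K (HT s I J K) := by
  refine ⟨?_, ?_, ?_, ?_⟩ <;> intro X Y Z
  · have h1 := cI X Y Z
    have h2 := cI X (J Y) (J Z)
    have h3 := cJ X (K Y) Z
    simp only [HT_apply]
    simp only [h.II, h.JJ, h.KK, h.IJ, h.JI, h.JK, h.KJ, h.KI, h.IK] at h1 h2 h3 ⊢
    linear_combination h1 + h2 - 2 * h3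
  all_goals
    simp only [HT_apply, h.II, h.JJ, h.KK, h.IJ, h.JI, h.JK, h.KJ, h.KI, h.IK, map_neg,
      LinearMap.neg_apply]
    ring

theorem Herm_zero (h : QH I J K g e) {P : V →ₗ[C] V →ₗ[C] V →ₗ[C] C} (hP : Herm I J K P)
    (hQ : ∀ X Y Z, P X Y Z + P (I X) Y (I Z) = P Y X Z + P (I Y) X (I Z)) (X Y Z : V) :
    P X Y Z = 0 := by
  let R : V → V → V → C := fun X Y Z => P X Y (J Z) + P (I X) Y (I (J Z))
  have hs : ∀ X Y Z, R X Y Z = R Y X Z := fun X Y Z => hQ X Y (J Z)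
  have ha : ∀ X Y Z, R X Y Z = -R X Z Y := by
    intro X Y Z
    simp only [R, h.IJ, hP.hJ, hP.hK]
    rw [hP.symm X (J Y) Z, hP.symm (I X) (K Y) Z]
    simp only [hP.hJ, hP.hK]
    ring
  have hz : ∀ X Y Z, R X Y Z = 0 := by
    intro X Y Z
    apply self_neg
    calc R X Y Z = -R X Z Y := ha _ _ _
      _ = -R Z X Y := by rw [hs]
      _ = R Z Y X := by rw [ha Z X Y, neg_neg]
      _ = R Y Z X := by rw [hs]
      _ = -R Y X Z := ha _ _ _
      _ = -R X Y Z := by rw [hs]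
  have h1 := hz X Y (J Z)
  have h2 := hz X (J Y) Z
  simp only [R, h.II, h.JJ, h.KK, h.IJ, h.JI, h.JK, h.KJ, h.KI, h.IK, map_neg, hP.hI, hP.hJ, hP.hK,
      LinearMap.neg_apply] at h1 h2
  apply two_cancel
  linear_combination h2 - h1

theorem S3H_zero (h : QH I J K g e) (hs : ∀ X Y Z, s X Y Z = s Y X Z)
    (cI : SymComm s I) (cJ : SymComm s J) (cK : SymComm s K) (X Y Z : V) :
    HT s J K I X Y Z = HT s K I J (I X) Y Z := by
  have hJ := (HT_herm s h.cyc cJ cK).cyc.cyc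
  have hK := (HT_herm s h.cyc.cyc cK cI).cyc
  let P : V →ₗ[C] V →ₗ[C] V →ₗ[C] C := mkTri
    (fun X Y Z => HT s J K I X Y Z - HT s K I J (I X) Y Z)
    (by intros; simp only [map_add, LinearMap.add_apply]; ring)
    (by intros; simp only [map_smul, LinearMap.smul_apply, smul_eq_mul]; ring)
    (by intros; simp only [map_add, LinearMap.add_apply]; ring)
    (by intros; simp only [map_smul, LinearMap.smul_apply, smul_eq_mul]; ring)
    (by intros; simp only [map_add, LinearMap.add_apply]; ring)
    (by intros; simp only [map_smul, LinearMap.smul_apply, smul_eq_mul]; ring)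
  have hPa : ∀ X Y Z, P X Y Z = HT s J K I X Y Z - HT s K I J (I X) Y Z := fun _ _ _ => rfl
  have hP : Herm I J K P := by
    constructor <;> intro X Y Z <;> simp only [hPa]
    · rw [hJ.symm, hK.symm]
    · rw [hJ.hI, hK.hI]; ring
    · rw [hJ.hJ, hK.hJ]; ring
    · rw [hJ.hK, hK.hK]; ring
  have := Herm_zero h hP (fun X Y Z => by
    simp only [hPa, HT_apply, h.II, h.JJ, h.KK, h.IJ, h.JI,
      h.JK, h.KJ, h.KI, h.IK, map_neg, LinearMap.neg_apply]
    simp only [hs Y X, hs Y (I X), hs Y (J X), hs Y (K X), hs (I Y) X, hs (I Y) (I X),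
      hs (I Y) (J X), hs (I Y) (K X)]
    ring) X Y Z
  rw [hPa] at this
  exact sub_eq_zero.mp this

end S3H

/-! ### contractions -/

theorem sum_g (h : QH I J K g e) (φ : V →ₗ[C] C) (X : V) : ∑ i, g X (e i) * φ (e i) = φ X := by
  conv_rhs => rw [h.span X]
  simp

theorem contr_skew (h : QH I J K g e) (A : V →ₗ[C] V) (hA : ∀ X Y, g (A X) Y = -g X (A Y))
    (b : V →ₗ[C] V →ₗ[C] C) : ∑ i, b (A (e i)) (e i) = -∑ i, b (e i) (A (e i)) := by
  have h1 : ∀ i, b (A (e i)) (e i) = ∑ j, g (A (e i)) (e j) * b (e j) (e i) := fun i =>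
    (sum_g h (b.flip (e i)) _).symm
  have h2 : ∀ i, b (e i) (A (e i)) = ∑ j, g (A (e i)) (e j) * b (e i) (e j) := fun i =>
    (sum_g h (b (e i)) _).symm
  simp only [h1, h2]
  rw [Finset.sum_comm, ← Finset.sum_neg_distrib]
  refine Finset.sum_congr rfl fun i _ => ?_
  rw [← Finset.sum_neg_distrib]
  refine Finset.sum_congr rfl fun j _ => ?_
  rw [hA, h.symm]; ring

theorem gself (h : QH I J K g e) (A : V →ₗ[C] V) (hA : ∀ X Y, g (A X) Y = -g X (A Y)) (X : V) :
    g X (A X) = 0 := by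
  apply self_neg
  rw [← hA, h.symm]

/-! ### adapted pairs -/

/-- unit-type vector `a` and quaternionically orthogonal vector `f` -/
structure Pair (I J K : V →ₗ[C] V) (g : V →ₗ[C] V →ₗ[C] C) (a f : V) : Prop where
  aa : g a a = 1
  a0 : g a f = 0
  aI : g a (I f) = 0
  aJ : g a (J f) = 0
  aK : g a (K f) = 0

theorem gram_zero (h : QH I J K g e) (x y : Fin 9 → V) :
    Matrix.det (Matrix.of fun i j => g (x i) (y j)) = 0 := by
  let A : Matrix (Fin 9) (Fin 9) C := fun i j => Fin.lastCases (motive := fun _ => C) 0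
    (fun k : Fin 8 => g (x i) (e k)) j
  let B : Matrix (Fin 9) (Fin 9) C := fun j i => Fin.lastCases (motive := fun _ => C) 0
    (fun k : Fin 8 => g (e k) (y i)) j
  have : (Matrix.of fun i j => g (x i) (y j)) = A * B := by
    ext i j
    rw [Matrix.mul_apply, Fin.sum_univ_castSucc]
    simp only [A, B, Fin.lastCases_castSucc, Fin.lastCases_last, Matrix.of_apply]
    rw [mul_zero, add_zero]
    exact (sum_g h (g.flip (y j)) _).symm
  rw [this, Matrix.det_mul, Matrix.det_eq_zero_of_column_eq_zero (Fin.last 8), zero_mul]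
  intro i
  exact Fin.lastCases_last


theorem Pair.cyc {a f : V} (p : Pair I J K g a f) : Pair J K I g a f :=
  ⟨p.aa, p.a0, p.aJ, p.aK, p.aI⟩

theorem Pair.rotf (h : QH I J K g e) {a f : V} (p : Pair I J K g a f) : Pair I J K g a (I f) :=
  ⟨p.aa, p.aI, by rw [h.II, map_neg, p.a0, neg_zero], by rw [h.JI, map_neg, p.aK, neg_zero],
    by rw [h.KI, p.aJ]⟩

theorem Pair.rota (h : QH I J K g e) {a f : V} (p : Pair I J K g a f) : Pair I J K g (I a) f := by
  refine ⟨?_, ?_, ?_, ?_, ?_⟩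
  · rw [h.gI, h.II, map_neg, p.aa, neg_neg]
  · rw [h.gI, p.aI, neg_zero]
  · rw [h.gI, h.II, map_neg, p.a0, neg_neg]
  · rw [h.gI, h.IJ, p.aK, neg_zero]
  · rw [h.gI, h.IK, map_neg, p.aJ, neg_neg]

theorem gIf (h : QH I J K g e) (f : V) : g (I f) (I f) = g f f := by
  rw [h.gI, h.II, map_neg, neg_neg]

/-- the remainder of the expansion of a vector in the adapted pair -/
def rem (I J K : V →ₗ[C] V) (g : V →ₗ[C] V →ₗ[C] C) (a f X : V) : V :=
  g f f • X - g f f • (g X a • a + g X (I a) • I a + g X (J a) • J a + g X (K a) • K a)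
    - (g X f • f + g X (I f) • I f + g X (J f) • J f + g X (K f) • K f)

theorem rem_zero (h : QH I J K g e) {a f : V} (p : Pair I J K g a f) (X Y : V) :
    g f f ^ 4 * g (rem I J K g a f X) Y = 0 := by
  have aI := gself h I h.gI a
  have aJ := gself h J h.gJ a
  have aK := gself h K h.gK a
  have fI := gself h I h.gI f
  have fJ := gself h J h.gJ f
  have fK := gself h K h.gK f
  have f0 : g f a = 0 := by rw [h.symm, p.a0]
  have f1 : g f (I a) = 0 := by rw [h.symm, h.gI, p.aI, neg_zero]
  have f2 : g f (J a) = 0 := by rw [h.symm, h.gJ, p.aJ, neg_zero]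
  have f3 : g f (K a) = 0 := by rw [h.symm, h.gK, p.aK, neg_zero]
  have key := gram_zero h ![a, I a, J a, K a, f, I f, J f, K f, rem I J K g a f X]
    ![a, I a, J a, K a, f, I f, J f, K f, Y]
  have hr : ∀ Z, g (rem I J K g a f X) Z = g f f * g X Z
      - g f f * (g X a * g a Z + g X (I a) * g (I a) Z + g X (J a) * g (J a) Z
        + g X (K a) * g (K a) Z)
      - (g X f * g f Z + g X (I f) * g (I f) Z + g X (J f) * g (J f) Z
        + g X (K f) * g (K f) Z) := by
    intro Z
    simp only [rem, map_sub, map_add, map_smul, LinearMap.sub_apply, LinearMap.add_apply,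
      LinearMap.smul_apply, smul_eq_mul]
  rw [Matrix.det_of_upperTriangular] at key
  · simp only [Fin.prod_univ_succ, Fin.prod_univ_zero, Matrix.of_apply, Matrix.cons_val_zero,
      Matrix.cons_val_succ, mul_one] at key
    simp only [h.gI, h.gJ, h.gK, h.II, h.JJ, h.KK, map_neg, neg_neg, p.aa, one_mul] at key
    linear_combination key
  · intro i j hij
    rw [Matrix.of_apply]
    fin_cases i <;> fin_cases j <;> first
      | exact absurd hij (by decide)
      | (simp [hr, h.gI, h.gJ, h.gK, h.II, h.JJ, h.KK, h.IJ, h.JI, h.JK, h.KJ, h.KI, h.IK,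
          aI, aJ, aK, fI, fJ, fK, f0, f1, f2, f3, p.aa, p.a0, p.aI, p.aJ, p.aK]; try ring)

theorem expand (h : QH I J K g e) {a f : V} (p : Pair I J K g a f) (φ : V →ₗ[C] C) (X : V) :
    g f f ^ 5 * φ X = g f f ^ 5 * (g X a * φ a + g X (I a) * φ (I a) + g X (J a) * φ (J a)
        + g X (K a) * φ (K a))
      + g f f ^ 4 * (g X f * φ f + g X (I f) * φ (I f) + g X (J f) * φ (J f)
        + g X (K f) * φ (K f)) := by
  have h1 : g f f ^ 4 * φ (rem I J K g a f X) = 0 := by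
    rw [← sum_g h φ, Finset.mul_sum]
    refine Finset.sum_eq_zero fun i _ => ?_
    rw [← mul_assoc, rem_zero h p, zero_mul]
  simp only [rem, map_sub, map_add, map_smul, smul_eq_mul] at h1
  linear_combination h1

theorem expand_zero (h : QH I J K g e) {a f : V} (p : Pair I J K g a f) (φ : V →ₗ[C] C) (c : C)
    (h0 : c * φ a = 0) (h1 : c * φ (I a) = 0) (h2 : c * φ (J a) = 0) (h3 : c * φ (K a) = 0)
    (h4 : c * φ f = 0) (h5 : c * φ (I f) = 0) (h6 : c * φ (J f) = 0) (h7 : c * φ (K f) = 0)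
    (X : V) : g f f ^ 5 * c * φ X = 0 := by
  have := expand h p φ X
  linear_combination c * this + g f f ^ 5 * (g X a * h0 + g X (I a) * h1 + g X (J a) * h2
        + g X (K a) * h3) + g f f ^ 4 * (g X f * h4 + g X (I f) * h5 + g X (J f) * h6
        + g X (K f) * h7)

theorem trace_pair (h : QH I J K g e) {a f : V} (p : Pair I J K g a f)
    (b : V →ₗ[C] V →ₗ[C] C) : g f f ^ 5 * ∑ i, b (e i) (e i) =
      g f f ^ 5 * (b a a + b (I a) (I a) + b (J a) (J a) + b (K a) (K a))
      + g f f ^ 4 * (b f f + b (I f) (I f) + b (J f) (J f) + b (K f) (K f)) := by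
  have h1 : ∀ i, g f f ^ 5 * b (e i) (e i) = _ := fun i => expand h p (b.flip (e i)) (e i)
  rw [Finset.mul_sum]
  simp only [h1, Finset.sum_add_distrib, ← Finset.mul_sum, LinearMap.flip_apply]
  have h2 : ∀ Z, ∑ i, g (e i) Z * b Z (e i) = b Z Z := by
    intro Z
    simp only [h.symm _ Z]
    exact sum_g h (b Z) Z
  simp only [h2]

/-- the obstruction tensor -/
def FT (k : V →ₗ[C] V →ₗ[C] V →ₗ[C] C) (I J K : V →ₗ[C] V) : V →ₗ[C] V →ₗ[C] V →ₗ[C] C :=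
  mkTri (fun X Y Z => 2 * k X Y Z - k Y X Z - k Z X Y
      + (k (I Y) (I X) Z + k (J Y) (J X) Z + k (K Y) (K X) Z)
      + (k (I Z) (I X) Y + k (J Z) (J X) Y + k (K Z) (K X) Y))
    (by intros; simp only [map_add, LinearMap.add_apply]; ring)
    (by intros; simp only [map_smul, LinearMap.smul_apply, smul_eq_mul]; ring)
    (by intros; simp only [map_add, LinearMap.add_apply]; ring)
    (by intros; simp only [map_smul, LinearMap.smul_apply, smul_eq_mul]; ring)
    (by intros; simp only [map_add, LinearMap.add_apply]; ring)
    (by intros; simp only [map_smul, LinearMap.smul_apply, smul_eq_mul]; ring)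

theorem FT_apply (k : V →ₗ[C] V →ₗ[C] V →ₗ[C] C) (X Y Z : V) :
    FT k I J K X Y Z = 2 * k X Y Z - k Y X Z - k Z X Y
      + (k (I Y) (I X) Z + k (J Y) (J X) Z + k (K Y) (K X) Z)
      + (k (I Z) (I X) Y + k (J Z) (J X) Y + k (K Z) (K X) Y) := rfl

theorem FT_cyc (k : V →ₗ[C] V →ₗ[C] V →ₗ[C] C) (X Y Z : V) :
    FT k J K I X Y Z = FT k I J K X Y Z := by
  simp only [FT_apply]; ring

theorem FT_herm (h : QH I J K g e) {k : V →ₗ[C] V →ₗ[C] V →ₗ[C] C} (hk : Herm I J K k) :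
    Herm I J K (FT k I J K) := by
  refine ⟨?_, ?_, ?_, ?_⟩ <;> intro X Y Z
  · simp only [FT_apply]
    rw [hk.symm X Y Z]
    ring
  all_goals
    simp only [FT_apply, h.II, h.JJ, h.KK, h.IJ, h.JI, h.JK, h.KJ, h.KI, h.IK, map_neg,
      LinearMap.neg_apply, hk.hI, hk.hJ, hk.hK]
    ring

theorem Herm.selfI {k : V →ₗ[C] V →ₗ[C] V →ₗ[C] C} (hk : Herm I J K k) (X Y : V) :
    k X (I Y) Y = 0 := by
  apply self_neg
  rw [← hk.hI, hk.symm]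

theorem Herm.selfI' {k : V →ₗ[C] V →ₗ[C] V →ₗ[C] C} (hk : Herm I J K k) (X Y : V) :
    k X Y (I Y) = 0 := by rw [hk.symm, hk.selfI]


/-- Hermitian tensors all of whose contractions vanish -/
structure TF (I J K : V →ₗ[C] V) (e : Fin (4 * 2) → V)
    (k : V →ₗ[C] V →ₗ[C] V →ₗ[C] C) : Prop extends Herm I J K k where
  tr : ∀ X, ∑ i, k X (e i) (e i) = 0
  ct : ∀ Z, ∑ i, k (e i) (e i) Z = 0

variable {k : V →ₗ[C] V →ₗ[C] V →ₗ[C] C}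

/-- freeze the last slot -/
def sl (k : V →ₗ[C] V →ₗ[C] V →ₗ[C] C) (Z : V) : V →ₗ[C] V →ₗ[C] C :=
  LinearMap.mk₂ C (fun X Y => k X Y Z)
    (by intros; simp only [map_add, LinearMap.add_apply])
    (by intros; simp only [map_smul, LinearMap.smul_apply])
    (by intros; simp only [map_add, LinearMap.add_apply])
    (by intros; simp only [map_smul, LinearMap.smul_apply])

theorem sl_apply (X Y Z : V) : sl k Z X Y = k X Y Z := rfl

theorem Herm.dI (h : QH I J K g e) (hk : Herm I J K k) (X Y Z : V) :
    k X (I Y) (I Z) = k X Y Z := by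
  rw [hk.hI, h.II, map_neg, LinearMap.neg_apply, neg_neg]

theorem pair_tr (h : QH I J K g e) (hk : TF I J K e k) {a f : V} (p : Pair I J K g a f) (X : V) :
    g f f ^ 4 * (g f f * k X a a + k X f f) = 0 := by
  have h1 := trace_pair h p (k X)
  rw [hk.tr] at h1
  simp only [hk.toHerm.dI h, hk.toHerm.cyc.dI h.cyc, hk.toHerm.cyc.cyc.dI h.cyc.cyc] at h1
  refine nat_cancel 4 (by norm_num) _ ?_
  push_cast
  linear_combination -h1

theorem pair_ct (h : QH I J K g e) (hk : TF I J K e k) {a f : V} (p : Pair I J K g a f) (Z : V) :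
    g f f ^ 5 * (k a a Z + k (I a) (I a) Z + k (J a) (J a) Z + k (K a) (K a) Z)
      + g f f ^ 4 * (k f f Z + k (I f) (I f) Z + k (J f) (J f) Z + k (K f) (K f) Z) = 0 := by
  have h1 := trace_pair h p (sl k Z)
  simp only [sl_apply] at h1
  rw [hk.ct] at h1
  linear_combination -h1

theorem F_aaa (hk : Herm I J K k) (a : V) : FT k I J K a a a = 0 := by
  rw [FT_apply, hk.selfI, hk.cyc.selfI, hk.cyc.cyc.selfI]; ring

theorem pair_G1 (h : QH I J K g e) (hk : TF I J K e k) {a f : V} (p : Pair I J K g a f) :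
    g f f ^ 5 * (k f a a - (k a a f + k (I a) (I a) f + k (J a) (J a) f + k (K a) (K a) f)) = 0 := by
  have h1 := pair_tr h hk p f
  have h2 := pair_ct h hk p f
  rw [hk.selfI, hk.cyc.selfI, hk.cyc.cyc.selfI] at h2
  linear_combination h1 - h2

theorem pair_G2 (h : QH I J K g e) (hk : TF I J K e k) {a f : V} (p : Pair I J K g a f) :
    g f f ^ 5 * (k a f f - (k f f a + k (I f) (I f) a + k (J f) (J f) a + k (K f) (K f) a)) = 0 := by
  have h1 := pair_tr h hk p a
  have h2 := pair_ct h hk p a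
  rw [hk.selfI, hk.cyc.selfI, hk.cyc.cyc.selfI] at h2
  linear_combination g f f * (h1 - h2)

theorem F_faa (hk : Herm I J K k) (a f : V) : FT k I J K f a a =
    2 * (k f a a - (k a a f + k (I a) (I a) f + k (J a) (J a) f + k (K a) (K a) f)) := by
  rw [FT_apply, hk.symm a f a, hk.symm _ (I f) a, hk.symm _ (J f) a, hk.symm _ (K f) a,
    hk.hI, hk.hJ, hk.hK]
  ring

theorem F_aaf (hk : Herm I J K k) (a f : V) : FT k I J K a a f =
    -(k f a a - (k a a f + k (I a) (I a) f + k (J a) (J a) f + k (K a) (K a) f)) := by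
  rw [FT_apply, hk.selfI, hk.cyc.selfI, hk.cyc.cyc.selfI]
  ring

theorem L1 (h : QH I J K g e) (hk : TF I J K e k) {a f : V} (p : Pair I J K g a f) (Z : V) :
    g f f ^ 5 * g f f ^ 5 * FT k I J K a a Z = 0 := by
  have hF := FT_herm h hk.toHerm
  have q : ∀ f', Pair I J K g a f' → g f' f' ^ 5 * FT k I J K a a f' = 0 := fun f' p' => by
    rw [F_aaf hk.toHerm]; linear_combination -pair_G1 h hk p'
  have pJ := (p.cyc.rotf h.cyc).cyc.cyc
  have pK := (p.cyc.cyc.rotf h.cyc.cyc).cyc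
  refine expand_zero h p _ _ ?_ ?_ ?_ ?_ ?_ ?_ ?_ ?_ Z
  · rw [F_aaa hk.toHerm, mul_zero]
  · rw [hF.selfI', mul_zero]
  · rw [hF.cyc.selfI', mul_zero]
  · rw [hF.cyc.cyc.selfI', mul_zero]
  · exact q f p
  · simpa only [gIf h] using q _ (p.rotf h)
  · simpa only [gIf h.cyc] using q _ pJ
  · simpa only [gIf h.cyc.cyc] using q _ pK

theorem L2 (h : QH I J K g e) (hk : TF I J K e k) {a f : V} (p : Pair I J K g a f) (Z : V) :
    g f f ^ 5 * g f f ^ 5 * FT k I J K f f Z = 0 := by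
  have hF := FT_herm h hk.toHerm
  have q : ∀ a', Pair I J K g a' f → g f f ^ 5 * FT k I J K f f a' = 0 := fun f' p' => by
    rw [F_aaf hk.toHerm]; linear_combination -pair_G2 h hk p'
  have pJ := (p.cyc.rota h.cyc).cyc.cyc
  have pK := (p.cyc.cyc.rota h.cyc.cyc).cyc
  refine expand_zero h p _ _ ?_ ?_ ?_ ?_ ?_ ?_ ?_ ?_ Z
  · exact q a p
  · exact q _ (p.rota h)
  · exact q _ pJ
  · exact q _ pK
  · rw [F_aaa hk.toHerm, mul_zero]
  · rw [hF.selfI', mul_zero]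
  · rw [hF.cyc.selfI', mul_zero]
  · rw [hF.cyc.cyc.selfI', mul_zero]

theorem L3 (h : QH I J K g e) (hk : TF I J K e k) {a f : V} (p : Pair I J K g a f) (Z : V) :
    g f f ^ 5 * g f f ^ 5 * FT k I J K a f Z = 0 := by
  have hF := FT_herm h hk.toHerm
  have q : ∀ f', Pair I J K g a f' → g f' f' ^ 5 * FT k I J K a f' a = 0 := fun f' p' => by
    rw [hF.symm, F_aaf hk.toHerm]; linear_combination -pair_G1 h hk p'
  have pJ := (p.cyc.rotf h.cyc).cyc.cyc
  have pK := (p.cyc.cyc.rotf h.cyc.cyc).cyc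
  refine expand_zero h p _ _ ?_ ?_ ?_ ?_ ?_ ?_ ?_ ?_ Z
  · exact q f p
  · rw [hF.hI, mul_neg, neg_eq_zero]
    simpa only [gIf h] using q _ (p.rotf h)
  · rw [hF.hJ, mul_neg, neg_eq_zero]
    simpa only [gIf h.cyc] using q _ pJ
  · rw [hF.hK, mul_neg, neg_eq_zero]
    simpa only [gIf h.cyc.cyc] using q _ pK
  · rw [F_faa hk.toHerm]; linear_combination 2 * pair_G2 h hk p
  · rw [hF.selfI', mul_zero]
  · rw [hF.cyc.selfI', mul_zero]
  · rw [hF.cyc.cyc.selfI', mul_zero]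

theorem L4 (h : QH I J K g e) (hk : TF I J K e k) {a f : V} (p : Pair I J K g a f) (Z : V) :
    g f f ^ 5 * g f f ^ 5 * FT k I J K f a Z = 0 := by
  have hF := FT_herm h hk.toHerm
  have q : ∀ a', Pair I J K g a' f → g f f ^ 5 * FT k I J K f a' f = 0 := fun f' p' => by
    rw [hF.symm, F_aaf hk.toHerm]; linear_combination -pair_G2 h hk p'
  have pJ := (p.cyc.rota h.cyc).cyc.cyc
  have pK := (p.cyc.cyc.rota h.cyc.cyc).cyc
  refine expand_zero h p _ _ ?_ ?_ ?_ ?_ ?_ ?_ ?_ ?_ Z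
  · rw [F_faa hk.toHerm]; linear_combination 2 * pair_G1 h hk p
  · rw [hF.selfI', mul_zero]
  · rw [hF.cyc.selfI', mul_zero]
  · rw [hF.cyc.cyc.selfI', mul_zero]
  · exact q a p
  · rw [hF.hI, mul_neg, neg_eq_zero]
    exact q _ (p.rota h)
  · rw [hF.hJ, mul_neg, neg_eq_zero]
    exact q _ pJ
  · rw [hF.hK, mul_neg, neg_eq_zero]
    exact q _ pK

theorem L5 (h : QH I J K g e) (hk : TF I J K e k) {a f x : V} (p : Pair I J K g a f)
    (ha : ∀ Z, g f f ^ 5 * g f f ^ 5 * FT k I J K x a Z = 0)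
    (hf : ∀ Z, g f f ^ 5 * g f f ^ 5 * FT k I J K x f Z = 0) (Y Z : V) :
    g f f ^ 5 * (g f f ^ 5 * g f f ^ 5) * FT k I J K x Y Z = 0 := by
  have hF := FT_herm h hk.toHerm
  rw [hF.symm]
  refine expand_zero h p _ _ ?_ ?_ ?_ ?_ ?_ ?_ ?_ ?_ Y <;> rw [hF.symm]
  · exact ha _
  · have := ha (I Z)
    rw [hF.hI] at this
    linear_combination -this
  · have := ha (J Z)
    rw [hF.hJ] at this
    linear_combination -this
  · have := ha (K Z)
    rw [hF.hK] at this
    linear_combination -this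
  · exact hf _
  · have := hf (I Z)
    rw [hF.hI] at this
    linear_combination -this
  · have := hf (J Z)
    rw [hF.hJ] at this
    linear_combination -this
  · have := hf (K Z)
    rw [hF.hK] at this
    linear_combination -this

theorem L6 (h : QH I J K g e) (hk : TF I J K e k) {a f : V} (p : Pair I J K g a f) (X Y Z : V) :
    g f f ^ 5 * (g f f ^ 5 * (g f f ^ 5 * g f f ^ 5)) * FT k I J K X Y Z = 0 := by
  have pJ := (p.cyc.rotf h.cyc).cyc.cyc
  have pK := (p.cyc.cyc.rotf h.cyc.cyc).cyc
  have pJ' := (p.cyc.rota h.cyc).cyc.cyc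
  have pK' := (p.cyc.cyc.rota h.cyc.cyc).cyc
  have qa : ∀ a', Pair I J K g a' f →
      g f f ^ 5 * (g f f ^ 5 * g f f ^ 5) * FT k I J K a' Y Z = 0 := fun a' p' =>
    L5 h hk p' (L1 h hk p') (L3 h hk p') Y Z
  have qf : ∀ f', Pair I J K g a f' →
      g f' f' ^ 5 * (g f' f' ^ 5 * g f' f' ^ 5) * FT k I J K f' Y Z = 0 := fun f' p' =>
    L5 h hk p' (L4 h hk p') (L2 h hk p') Y Z
  obtain ⟨φ, hφ⟩ : ∃ φ : V →ₗ[C] C, ∀ X, φ X = FT k I J K X Y Z :=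
    ⟨(sl (FT k I J K) Z).flip Y, fun X => by rw [LinearMap.flip_apply, sl_apply]⟩
  simp only [← hφ] at qa qf ⊢
  refine expand_zero h p φ _ ?_ ?_ ?_ ?_ ?_ ?_ ?_ ?_ X
  · exact qa a p
  · exact qa _ (p.rota h)
  · exact qa _ pJ'
  · exact qa _ pK'
  · exact qf _ p
  · simpa only [gIf h] using qf _ (p.rotf h)
  · simpa only [gIf h.cyc] using qf _ pJ
  · simpa only [gIf h.cyc.cyc] using qf _ pK

theorem FT_zero (h : QH I J K g e) (hk : TF I J K e k) (X Y Z : V) : FT k I J K X Y Z = 0 := by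
  set a := e 0 with ha
  have haa : g a a = 1 := by rw [ha, h.on]; simp
  have aI := gself h I h.gI a
  have aJ := gself h J h.gJ a
  have aK := gself h K h.gK a
  let f : Fin (4 * 2) → V := fun i => e i - (g (e i) a • a + g (e i) (I a) • I a
    + g (e i) (J a) • J a + g (e i) (K a) • K a)
  have s1 : ∀ i, g a (I (e i)) = -g (e i) (I a) := fun i => by
    rw [h.symm (e i), h.gI, neg_neg]
  have s2 : ∀ i, g a (J (e i)) = -g (e i) (J a) := fun i => by
    rw [h.symm (e i), h.gJ, neg_neg]
  have s3 : ∀ i, g a (K (e i)) = -g (e i) (K a) := fun i => by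
    rw [h.symm (e i), h.gK, neg_neg]
  have pf : ∀ i, Pair I J K g a (f i) := by
    intro i
    refine ⟨haa, ?_, ?_, ?_, ?_⟩ <;>
    · simp only [f, map_sub, map_add, map_smul, smul_eq_mul, h.II, h.JJ, h.KK, h.IJ, h.JI, h.JK,
        h.KJ, h.KI, h.IK, map_neg, haa, aI, aJ, aK, s1, s2, s3, h.symm a (e i)]
      ring
  have vf : ∀ i, g (f i) (f i) = 1 - (g a (e i) * g (e i) a + g (I a) (e i) * g (e i) (I a)
      + g (J a) (e i) * g (e i) (J a) + g (K a) (e i) * g (e i) (K a)) := by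
    intro i
    have p := pf i
    have q0 : g (f i) a = 0 := by rw [h.symm, p.a0]
    have q1 : g (f i) (I a) = 0 := by rw [h.symm, h.gI, p.aI, neg_zero]
    have q2 : g (f i) (J a) = 0 := by rw [h.symm, h.gJ, p.aJ, neg_zero]
    have q3 : g (f i) (K a) = 0 := by rw [h.symm, h.gK, p.aK, neg_zero]
    have : g (f i) (f i) = g (f i) (e i) := by
      conv_lhs => arg 2; simp only [f]
      simp only [map_sub, map_add, map_smul, smul_eq_mul, q0, q1, q2, q3]
      ring
    rw [this]
    simp only [f, map_sub, map_add, map_smul, smul_eq_mul, LinearMap.sub_apply,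
      LinearMap.add_apply, LinearMap.smul_apply, h.on]
    simp only [if_true]
    ring
  have sv : ∑ i, g (f i) (f i) = 4 := by
    simp only [vf, Finset.sum_sub_distrib, Finset.sum_add_distrib]
    have c : ∀ X, ∑ i, g X (e i) * g (e i) X = g X X := fun X => sum_g h (g.flip X) X
    rw [c, c, c, c, gIf h, gIf h.cyc, gIf h.cyc.cyc, haa]
    simp
    norm_num
  have htop : Ideal.span (Set.range fun i => g (f i) (f i)) = ⊤ := by
    rw [Ideal.eq_top_iff_one]
    have h4 : (4 : C) ∈ Ideal.span (Set.range fun i => g (f i) (f i)) := by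
      rw [← sv]
      exact Ideal.sum_mem _ fun i _ => Ideal.subset_span ⟨i, rfl⟩
    have : (1 : C) = algebraMap ℝ C (1 / 4) * 4 := by
      rw [show (4 : C) = algebraMap ℝ C 4 from (map_ofNat _ 4).symm, ← map_mul]
      norm_num
    rw [this]
    exact Ideal.mul_mem_left _ _ h4
  have htop2 := Ideal.span_pow_eq_top _ htop 20
  have hle : Ideal.span ((fun x : C => x ^ 20) '' Set.range fun i => g (f i) (f i)) ≤
      LinearMap.ker (LinearMap.toSpanSingleton C C (FT k I J K X Y Z)) := by
    rw [Ideal.span_le]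
    rintro _ ⟨_, ⟨i, rfl⟩, rfl⟩
    have := L6 h hk (pf i) X Y Z
    simp only [SetLike.mem_coe, LinearMap.mem_ker, LinearMap.toSpanSingleton_apply, smul_eq_mul]
    linear_combination this
  rw [htop2] at hle
  have := hle (Submodule.mem_top : (1 : C) ∈ ⊤)
  simpa using this


/-- the Hermitian tensor built from a one-form -/
def kE (I J K : V →ₗ[C] V) (g : V →ₗ[C] V →ₗ[C] C) (θ : V →ₗ[C] C) :
    V →ₗ[C] V →ₗ[C] V →ₗ[C] C :=
  mkTri (fun X Y Z => (g X Y * θ Z + g X (I Y) * θ (I Z) + g X (J Y) * θ (J Z)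
        + g X (K Y) * θ (K Z))
      + (g X Z * θ Y + g X (I Z) * θ (I Y) + g X (J Z) * θ (J Y) + g X (K Z) * θ (K Y))
      - θ X * g Y Z)
    (by intros; simp only [map_add, LinearMap.add_apply]; ring)
    (by intros; simp only [map_smul, LinearMap.smul_apply, smul_eq_mul]; ring)
    (by intros; simp only [map_add, LinearMap.add_apply]; ring)
    (by intros; simp only [map_smul, LinearMap.smul_apply, smul_eq_mul]; ring)
    (by intros; simp only [map_add, LinearMap.add_apply]; ring)
    (by intros; simp only [map_smul, LinearMap.smul_apply, smul_eq_mul]; ring)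

theorem kE_apply (θ : V →ₗ[C] C) (X Y Z : V) : kE I J K g θ X Y Z =
    (g X Y * θ Z + g X (I Y) * θ (I Z) + g X (J Y) * θ (J Z) + g X (K Y) * θ (K Z))
      + (g X Z * θ Y + g X (I Z) * θ (I Y) + g X (J Z) * θ (J Y) + g X (K Z) * θ (K Y))
      - θ X * g Y Z := rfl

theorem kE_herm (h : QH I J K g e) (θ : V →ₗ[C] C) : Herm I J K (kE I J K g θ) := by
  refine ⟨?_, ?_, ?_, ?_⟩ <;> intro X Y Z
  · simp only [kE_apply, h.symm Z Y]; ring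
  all_goals
    simp only [kE_apply, h.II, h.JJ, h.KK, h.IJ, h.JI, h.JK, h.KJ, h.KI, h.IK, map_neg,
      h.gI, h.gJ, h.gK]
    ring

theorem sum_gA (h : QH I J K g e) (A : V →ₗ[C] V) (hA : ∀ X Y, g (A X) Y = -g X (A Y))
    (φ : V →ₗ[C] C) (X : V) : ∑ i, g X (A (e i)) * φ (e i) = -φ (A X) := by
  have : ∀ i, g X (A (e i)) = -g (A X) (e i) := fun i => by rw [hA, neg_neg]
  simp only [this, neg_mul, Finset.sum_neg_distrib, sum_g h]

theorem sum_gA' (h : QH I J K g e) (A : V →ₗ[C] V) (hA : ∀ X Y, g (A X) Y = -g X (A Y))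
    (hAA : ∀ X, A (A X) = -X)
    (φ : V →ₗ[C] C) (X : V) : ∑ i, g X (A (e i)) * φ (A (e i)) = φ X := by
  have := sum_gA h A hA (φ.comp A) X
  simp only [LinearMap.comp_apply, hAA, map_neg, neg_neg] at this
  exact this

theorem sum_on (h : QH I J K g e) : ∑ i, g (e i) (e i) = 8 := by
  simp only [h.on]; simp

theorem kE_tr (h : QH I J K g e) (θ : V →ₗ[C] C) (X : V) :
    ∑ i, kE I J K g θ X (e i) (e i) = 0 := by
  simp only [kE_apply, Finset.sum_add_distrib, Finset.sum_sub_distrib, ← Finset.mul_sum,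
    sum_on h, sum_g h, sum_gA' h I h.gI h.II, sum_gA' h J h.gJ h.JJ, sum_gA' h K h.gK h.KK]
  ring

theorem kE_ct (h : QH I J K g e) (θ : V →ₗ[C] C) (Z : V) :
    ∑ i, kE I J K g θ (e i) (e i) Z = 5 * θ Z := by
  have q1 : ∀ i, g (e i) (I Z) * θ (I (e i)) = g (I Z) (e i) * (θ.comp I) (e i) := fun i => by
    rw [h.symm, LinearMap.comp_apply]
  have q2 : ∀ i, g (e i) (J Z) * θ (J (e i)) = g (J Z) (e i) * (θ.comp J) (e i) := fun i => by
    rw [h.symm, LinearMap.comp_apply]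
  have q3 : ∀ i, g (e i) (K Z) * θ (K (e i)) = g (K Z) (e i) * (θ.comp K) (e i) := fun i => by
    rw [h.symm, LinearMap.comp_apply]
  have q4 : ∀ i, g (e i) Z * θ (e i) = g Z (e i) * θ (e i) := fun i => by rw [h.symm]
  have q5 : ∀ i, θ (e i) * g (e i) Z = g Z (e i) * θ (e i) := fun i => by rw [h.symm, mul_comm]
  simp only [kE_apply, gself h I h.gI, gself h J h.gJ, gself h K h.gK, q1, q2, q3, q4, q5,
    Finset.sum_add_distrib, Finset.sum_sub_distrib, ← Finset.sum_mul, sum_on h, sum_g h, zero_mul,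
    Finset.sum_const_zero]
  simp only [LinearMap.comp_apply, h.II, h.JJ, h.KK, map_neg]
  ring

theorem decomp (h : QH I J K g e) (hk : Herm I J K k) (tr : ∀ X, ∑ i, k X (e i) (e i) = 0) :
    ∃ (k0 : V →ₗ[C] V →ₗ[C] V →ₗ[C] C) (θ : V →ₗ[C] C), TF I J K e k0 ∧
      ∀ X Y Z, k X Y Z = k0 X Y Z + kE I J K g θ X Y Z := by
  let θ : V →ₗ[C] C := algebraMap ℝ C (1 / 5) • ∑ i, k (e i) (e i)
  have hθ : ∀ Z, 5 * θ Z = ∑ i, k (e i) (e i) Z := by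
    intro Z
    simp only [θ, LinearMap.smul_apply, LinearMap.sum_apply, smul_eq_mul]
    rw [← mul_assoc, show (5 : C) = algebraMap ℝ C 5 from (map_ofNat _ 5).symm, ← map_mul]
    norm_num
  have hE := kE_herm h θ
  let k0 : V →ₗ[C] V →ₗ[C] V →ₗ[C] C := mkTri (fun X Y Z => k X Y Z - kE I J K g θ X Y Z)
    (by intros; simp only [map_add, LinearMap.add_apply]; ring)
    (by intros; simp only [map_smul, LinearMap.smul_apply, smul_eq_mul]; ring)
    (by intros; simp only [map_add, LinearMap.add_apply]; ring)
    (by intros; simp only [map_smul, LinearMap.smul_apply, smul_eq_mul]; ring)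
    (by intros; simp only [map_add, LinearMap.add_apply]; ring)
    (by intros; simp only [map_smul, LinearMap.smul_apply, smul_eq_mul]; ring)
  have h0 : ∀ X Y Z, k0 X Y Z = k X Y Z - kE I J K g θ X Y Z := fun _ _ _ => rfl
  refine ⟨k0, θ, ⟨⟨?_, ?_, ?_, ?_⟩, ?_, ?_⟩, ?_⟩
  · intro X Y Z; rw [h0, h0, hk.symm, hE.symm]
  · intro X Y Z; rw [h0, h0, hk.hI, hE.hI]; ring
  · intro X Y Z; rw [h0, h0, hk.hJ, hE.hJ]; ring
  · intro X Y Z; rw [h0, h0, hk.hK, hE.hK]; ring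
  · intro X; simp only [h0, Finset.sum_sub_distrib, tr, kE_tr h, sub_zero]
  · intro Z; simp only [h0, Finset.sum_sub_distrib, kE_ct h, hθ, sub_self]
  · intro X Y Z; rw [h0]; ring

/-- the contraction with the quaternions -/
def rho (I J K : V →ₗ[C] V) (k : V →ₗ[C] V →ₗ[C] V →ₗ[C] C) (X Y Z : V) : C :=
  k (I X) (I Y) Z + k (J X) (J Y) Z + k (K X) (K Y) Z

/-- its skew-symmetrisation -/
def cy (I J K : V →ₗ[C] V) (k : V →ₗ[C] V →ₗ[C] V →ₗ[C] C) (X Y Z : V) : C :=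
  rho I J K k X Y Z + rho I J K k Y Z X + rho I J K k Z X Y

theorem rho_cyc (X Y Z : V) : rho J K I k X Y Z = rho I J K k X Y Z := by
  simp only [rho]; ring

theorem cy_cyc (X Y Z : V) : cy J K I k X Y Z = cy I J K k X Y Z := by
  simp only [cy, rho_cyc]

theorem rho_skew (hk : Herm I J K k) (X Y Z : V) : rho I J K k X Z Y = -rho I J K k X Y Z := by
  simp only [rho]
  rw [hk.symm _ (I Z), hk.symm _ (J Z), hk.symm _ (K Z), hk.hI, hk.hJ, hk.hK]; ring

theorem cy_alt (hk : Herm I J K k) (X Y Z : V) : cy I J K k Y X Z = -cy I J K k X Y Z := by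
  simp only [cy]
  rw [rho_skew hk Y Z X, rho_skew hk X Y Z, rho_skew hk Z X Y]; ring

theorem cy_alt' (hk : Herm I J K k) (X Y Z : V) : cy I J K k X Z Y = -cy I J K k X Y Z := by
  simp only [cy]
  rw [rho_skew hk X Y Z, rho_skew hk Z X Y, rho_skew hk Y Z X]; ring

theorem cy_calL (h : QH I J K g e) (hk : Herm I J K k) (X Y Z : V) :
    cy I J K k (I X) (I Y) Z + cy I J K k (I X) Y (I Z) + cy I J K k X (I Y) (I Z)
      = cy I J K k X Y Z := by
  simp only [cy, rho, h.II, h.JJ, h.KK, h.IJ, h.JI, h.JK, h.KJ, h.KI, h.IK, map_neg,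
      LinearMap.neg_apply, hk.hI, hk.hJ, hk.hK]
  ring

theorem cy_rho (h : QH I J K g e) (hk : TF I J K e k) (X Y Z : V) :
    3 * cy I J K k X Y Z - (cy I J K k X (I Y) (I Z) + cy I J K k X (J Y) (J Z)
      + cy I J K k X (K Y) (K Z)) = 6 * rho I J K k X Y Z := by
  have h1 := FT_zero h hk (I X) (I Y) Z
  have h2 := FT_zero h hk (J X) (J Y) Z
  have h3 := FT_zero h hk (K X) (K Y) Z
  simp only [FT_apply, h.II, h.JJ, h.KK, h.IJ, h.JI, h.JK, h.KJ, h.KI, h.IK, map_neg,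
      LinearMap.neg_apply, hk.symm _ X Z, hk.symm _ (I X) Z, hk.symm _ (J X) Z, hk.symm _ (K X) Z,
      hk.hI, hk.hJ, hk.hK] at h1 h2 h3
  simp only [cy, rho, h.II, h.JJ, h.KK, h.IJ, h.JI, h.JK, h.KJ, h.KI, h.IK, map_neg,
      LinearMap.neg_apply, hk.hI, hk.hJ, hk.hK]
  linear_combination - h1 - h2 - h3

theorem ctA (h : QH I J K g e) (hk : TF I J K e k) (Z : V) :
    ∑ i, k (I (e i)) (e i) Z = 0 := by
  have := contr_skew h I h.gI (sl k Z)
  simp only [sl_apply] at this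
  rw [this]
  have q : ∀ i, k (e i) (I (e i)) Z = -k (e i) (e i) (I Z) := fun i => by rw [hk.hI, neg_neg]
  simp only [q, Finset.sum_neg_distrib, hk.ct, neg_zero]

theorem TF.cyc (hk : TF I J K e k) : TF J K I e k := ⟨hk.toHerm.cyc, hk.tr, hk.ct⟩

theorem cy_Lam (h : QH I J K g e) (hk : TF I J K e k) (X : V) :
    ∑ i, cy I J K k X (I (e i)) (e i) = 0 := by
  have t1 := ctA h hk
  have t2 := ctA h.cyc hk.cyc
  have t3 := ctA h.cyc.cyc hk.cyc.cyc
  have w1 : ∀ i a, k a (I X) (I (e i)) = k a (I (e i)) (I X) := fun i a => hk.symm _ _ _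
  have w2 : ∀ i a, k a (J X) (I (e i)) = k a (I (e i)) (J X) := fun i a => hk.symm _ _ _
  have w3 : ∀ i a, k a (K X) (I (e i)) = k a (I (e i)) (K X) := fun i a => hk.symm _ _ _
  have x2 : ∀ i a, k a (I X) (e i) = k a (e i) (I X) := fun i a => hk.symm _ _ _
  have x3 : ∀ i a, k a (J X) (e i) = k a (e i) (J X) := fun i a => hk.symm _ _ _
  have x4 : ∀ i a, k a (K X) (e i) = k a (e i) (K X) := fun i a => hk.symm _ _ _
  have y1 : ∀ i a Z, k a (I (e i)) Z = -k a (e i) (I Z) := fun i a Z => by rw [hk.hI, neg_neg]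
  have y2 : ∀ i a Z, k a (J (e i)) Z = -k a (e i) (J Z) := fun i a Z => by rw [hk.hJ, neg_neg]
  have y3 : ∀ i a Z, k a (K (e i)) Z = -k a (e i) (K Z) := fun i a Z => by rw [hk.hK, neg_neg]
  have z1 : ∀ i a, k a (e i) (I (e i)) = 0 := fun i a => hk.selfI' _ _
  have z2 : ∀ i a, k a (e i) (J (e i)) = 0 := fun i a => hk.toHerm.cyc.selfI' _ _
  have z3 : ∀ i a, k a (e i) (K (e i)) = 0 := fun i a => hk.toHerm.cyc.cyc.selfI' _ _
  simp only [cy, rho, h.II, h.JJ, h.KK, h.IJ, h.JI, h.JK, h.KJ, h.KI, h.IK, map_neg,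
    LinearMap.neg_apply, y1, y2, y3, w1, w2, w3, x2, x3, x4, z1, z2, z3]
  simp only [Finset.sum_add_distrib, Finset.sum_neg_distrib, t1, t2, t3, hk.tr, hk.ct]
  simp


theorem HT_trace (h : QH I J K g e) (s : V →ₗ[C] V →ₗ[C] V →ₗ[C] C) (X : V) :
    ∑ i, HT s I J K X (e i) (e i) = 4 * ∑ i, s X (e i) (I (e i)) := by
  have h1 := contr_skew h I h.gI (s X)
  have h2 := contr_skew h J h.gJ ((s X).compl₂ K)
  have h3 := contr_skew h K h.gK ((s X).compl₂ J)
  simp only [LinearMap.compl₂_apply, h.KJ, h.JK, map_neg, Finset.sum_neg_distrib, neg_neg] at h2 h3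
  simp only [HT_apply, Finset.sum_add_distrib, Finset.sum_sub_distrib, h1, h2, h3]
  ring

theorem core (h : QH I J K g e) (s : V →ₗ[C] V →ₗ[C] V →ₗ[C] C)
    (hs : ∀ X Y Z, s X Y Z = s Y X Z)
    (cI : SymComm s I) (cJ : SymComm s J) (cK : SymComm s K) :
    ∃ k : V →ₗ[C] V →ₗ[C] V →ₗ[C] C, Herm I J K k ∧ (∀ X, ∑ i, k X (e i) (e i) = 0) ∧
      ∀ X Y Z, 2 * (3 * s X Z Y - (s X (I Z) (I Y) + s X (J Z) (J Y) + s X (K Z) (K Y)))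
        - ((∑ i, s X (e i) (I (e i))) * g Y (I Z) + (∑ i, s X (e i) (J (e i))) * g Y (J Z)
          + (∑ i, s X (e i) (K (e i))) * g Y (K Z)) = -rho I J K k X Y Z := by
  have hI := HT_herm s h cI cJ
  have hJ := (HT_herm s h.cyc cJ cK).cyc.cyc
  have hK := (HT_herm s h.cyc.cyc cK cI).cyc
  have eI := S3H_zero s h.cyc hs cJ cK cI
  have eJ := S3H_zero s h.cyc.cyc hs cK cI cJ
  have eK := S3H_zero s h hs cI cJ cK
  let k : V →ₗ[C] V →ₗ[C] V →ₗ[C] C := mkTri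
    (fun X Y Z => -2 * HT s I J K (I X) Y Z + (∑ i, s (I X) (e i) (I (e i))) * g Y Z)
    (by intros; simp only [map_add, LinearMap.add_apply, Finset.sum_add_distrib]; ring)
    (by intros; simp only [map_smul, LinearMap.smul_apply, smul_eq_mul, ← Finset.mul_sum]; ring)
    (by intros; simp only [map_add, LinearMap.add_apply]; ring)
    (by intros; simp only [map_smul, LinearMap.smul_apply, smul_eq_mul]; ring)
    (by intros; simp only [map_add, LinearMap.add_apply]; ring)
    (by intros; simp only [map_smul, LinearMap.smul_apply, smul_eq_mul]; ring)
  have ka : ∀ X Y Z, k X Y Z =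
    -2 * HT s I J K (I X) Y Z + (∑ i, s (I X) (e i) (I (e i))) * g Y Z := fun _ _ _ => rfl
  -- the three slots agree
  have aJ : ∀ X Y Z, HT s I J K (K X) Y Z = -HT s J K I X Y Z := by
    intro X Y Z
    have := eJ (K X) Y Z
    rw [this, h.KK, map_neg]; rfl
  have aK : ∀ X Y Z, HT s I J K (J X) Y Z = HT s K I J X Y Z := by
    intro X Y Z; rw [eI]
  have tI := fun X => HT_trace h s X
  have tJ := fun X => HT_trace h.cyc s X
  have tK := fun X => HT_trace h.cyc.cyc s X
  have can : ∀ x y : C, 4 * x = 4 * y → x = y := fun x y hxy =>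
    sub_eq_zero.mp (nat_cancel 4 (by norm_num) _ (by push_cast; linear_combination hxy))
  have uJ : ∀ X, ∑ i, s (K X) (e i) (I (e i)) = -∑ i, s X (e i) (J (e i)) := by
    intro X
    apply can
    rw [← tI, mul_neg, ← tJ, ← Finset.sum_neg_distrib]
    exact Finset.sum_congr rfl fun i _ => aJ _ _ _
  have uK : ∀ X, ∑ i, s (J X) (e i) (I (e i)) = ∑ i, s X (e i) (K (e i)) := by
    intro X
    apply can
    rw [← tI, ← tK]
    exact Finset.sum_congr rfl fun i _ => aK _ _ _
  refine ⟨k, ⟨?_, ?_, ?_, ?_⟩, ?_, ?_⟩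
  · intro X Y Z; rw [ka, ka, hI.symm, h.symm]
  · intro X Y Z; rw [ka, ka, hI.hI, h.gI]; ring
  · intro X Y Z; rw [ka, ka, hI.hJ, h.gJ]; ring
  · intro X Y Z; rw [ka, ka, hI.hK, h.gK]; ring
  · intro X
    simp only [ka, Finset.sum_add_distrib, ← Finset.mul_sum, tI, sum_on h]
    ring
  · intro X Y Z
    have s1 : HT s I J K X (I Y) Z = -HT s I J K X (I Z) Y := by
      rw [hI.symm, hI.hI]
    have s2 : HT s J K I X (J Y) Z = -HT s J K I X (J Z) Y := by
      rw [hJ.symm, hJ.hJ]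
    have s3 : HT s K I J X (K Y) Z = -HT s K I J X (K Z) Y := by
      rw [hK.symm, hK.hK]
    simp only [rho, ka, h.II, h.IJ, h.IK, map_neg, LinearMap.neg_apply, aJ, aK, uJ, uK,
      Finset.sum_neg_distrib, s1, s2, s3, h.gI, h.gJ, h.gK]
    simp only [HT_apply, h.II, h.JJ, h.KK, h.IJ, h.JI, h.JK, h.KJ, h.KI, h.IK, map_neg,
      LinearMap.neg_apply]
    ring


theorem lam_sum (h : QH I J K g e) (s : V →ₗ[C] V →ₗ[C] V →ₗ[C] C) (X : V) (N : V → V → C)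
    (γI γK : C)
    (hN : ∀ Y Z, N Y Z = γI * g Y (K Z) - γK * g Y (I Z) - s X (J Z) Y - s X Z (J Y)) :
    ∑ i, ∑ j, N (e i) (e j) * g (e i) (K (e j)) = 8 * γI - 2 * ∑ i, s X (e i) (I (e i)) := by
  have h1 : ∀ j, ∑ i, N (e i) (e j) * g (e i) (K (e j))
      = γI * g (e j) (e j) - s X (J (e j)) (K (e j)) - s X (e j) (I (e j)) := by
    intro j
    let φ : V →ₗ[C] C := γI • g.flip (K (e j)) - γK • g.flip (I (e j)) - s X (J (e j))
      - (s X (e j)).comp J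
    have hφ : ∀ Y, N Y (e j) = φ Y := by
      intro Y
      rw [hN]
      simp only [φ, LinearMap.sub_apply, LinearMap.smul_apply, LinearMap.flip_apply,
        LinearMap.comp_apply, smul_eq_mul]
    have h2 := sum_g h φ (K (e j))
    have h3 : ∀ i, N (e i) (e j) * g (e i) (K (e j)) = g (K (e j)) (e i) * φ (e i) := by
      intro i; rw [hφ, h.symm, mul_comm]
    simp only [h3, h2]
    rw [← hφ]
    rw [hN, h.gK, h.gK, h.KK, h.KI, gself h J h.gJ, h.JK, map_neg]
    ring
  have h2 := contr_skew h J h.gJ ((s X).compl₂ K)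
  simp only [LinearMap.compl₂_apply, h.KJ, map_neg, Finset.sum_neg_distrib, neg_neg] at h2
  rw [Finset.sum_comm]
  simp only [h1, Finset.sum_sub_distrib, ← Finset.mul_sum, sum_on h, h2]
  ring

theorem xi_sum (h : QH I J K g e) (s : V →ₗ[C] V →ₗ[C] V →ₗ[C] C) (X : V)
    (NI NJ NK : V → V → C) (γI γJ γK : C)
    (hI : ∀ Y Z, NI Y Z = γK * g Y (J Z) - γJ * g Y (K Z) - s X (I Z) Y - s X Z (I Y))
    (hJ : ∀ Y Z, NJ Y Z = γI * g Y (K Z) - γK * g Y (I Z) - s X (J Z) Y - s X Z (J Y))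
    (hK : ∀ Y Z, NK Y Z = γJ * g Y (I Z) - γI * g Y (J Z) - s X (K Z) Y - s X Z (K Y)) (Y Z : V) :
    NI (I Y) Z + NJ (J Y) Z + NK (K Y) Z
      = 3 * s X Z Y - (s X (I Z) (I Y) + s X (J Z) (J Y) + s X (K Z) (K Y))
        - 2 * (γI * g Y (I Z) + γJ * g Y (J Z) + γK * g Y (K Z)) := by
  simp only [hI, hJ, hK, h.gI, h.gJ, h.gK, h.II, h.JJ, h.KK, h.IJ, h.JI, h.JK, h.KJ, h.KI, h.IK,
    map_neg]
  ring

theorem eh_sum (h : QH I J K g e) (A : V →ₗ[C] V) (X Y : V) :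
    ∑ i, g (e i) X * g (A (e i)) Y = g (A X) Y := by
  have := sum_g h ((g.flip Y).comp A) X
  simp only [LinearMap.comp_apply, LinearMap.flip_apply] at this
  rw [← this]
  exact Finset.sum_congr rfl fun i _ => by rw [h.symm]

theorem eh_sum' (h : QH I J K g e) (A : V →ₗ[C] V) (X Y Z : V) (a b : C) :
    ∑ i, g (e i) X * (g (A (e i)) Y * a - g (A (e i)) Z * b) = g (A X) Y * a - g (A X) Z * b := by
  rw [← eh_sum h A X Y, ← eh_sum h A X Z, Finset.sum_mul, Finset.sum_mul,
    ← Finset.sum_sub_distrib]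
  exact Finset.sum_congr rfl fun i _ => by ring

theorem kE_rho (h : QH I J K g e) (θ : V →ₗ[C] C) (X Y Z : V) :
    rho I J K (kE I J K g θ) X Y Z =
      3 * (g X Y * θ Z - g X Z * θ Y)
      - ((g (I X) Y * -θ (I Z) - g (I X) Z * -θ (I Y))
        + (g (J X) Y * -θ (J Z) - g (J X) Z * -θ (J Y))
        + (g (K X) Y * -θ (K Z) - g (K X) Z * -θ (K Y)))
      - (-θ (I X) * g Y (I Z) + -θ (J X) * g Y (J Z) + -θ (K X) * g Y (K Z)) := by
  simp only [rho, kE_apply, h.II, h.JJ, h.KK, h.IJ, h.JI, h.JK, h.KJ, h.KI, h.IK, map_neg,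
      h.gI, h.gJ, h.gK]
  ring

/-- a linear map from the linearity condition -/
theorem exists_lin (A : V → V) (hA : ∀ (f : C) X Y, A (f • X + Y) = f • A X + A Y) :
    ∃ L : V →ₗ[C] V, A = L := by
  have h0 : A 0 = 0 := by
    have := hA 1 0 0
    simpa using this
  exact ⟨{ toFun := A
           map_add' := fun X Y => by simpa using hA 1 X Y
           map_smul' := fun f X => by simpa [h0] using hA f X 0 }, rfl⟩

theorem exists_g {n : ℕ} (M : AQH n C V) : ∃ g : V →ₗ[C] V →ₗ[C] C, ∀ X Y, M.g X Y = g X Y :=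
  ⟨LinearMap.mk₂ C M.g M.g_add (fun f X Y => M.g_smul f X Y)
    (fun X Y Z => by rw [M.g_symm, M.g_add, M.g_symm Y, M.g_symm Z])
    (fun f X Y => by rw [M.g_symm, M.g_smul, M.g_symm Y, smul_eq_mul]), fun _ _ => rfl⟩

theorem exists_QH (M : AQH 2 C V) : ∃ (I J K : V →ₗ[C] V) (g : V →ₗ[C] V →ₗ[C] C),
    M.I = I ∧ M.J = J ∧ M.K = K ∧ (∀ X Y, M.g X Y = g X Y) ∧ QH I J K g M.frame := by
  obtain ⟨I, hI⟩ := exists_lin M.I M.I_lin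
  obtain ⟨J, hJ⟩ := exists_lin M.J M.J_lin
  obtain ⟨K, hK⟩ := exists_lin M.K M.K_lin
  obtain ⟨g, hg⟩ := exists_g M
  have II := M.I_sq
  have JJ := M.J_sq
  have IJ := M.K_def
  have ac := M.anticomm
  have mI := M.I_metric
  have mJ := M.J_metric
  have on := M.frame_orthonormal
  have sp := M.frame_span
  have sy := M.g_symm
  simp only [hI, hJ, hK, hg] at II JJ IJ ac mI mJ on sp sy
  have ac' : ∀ X, J (I X) = -I (J X) := fun X => by rw [ac, neg_neg]
  have gI : ∀ X Y, g (I X) Y = -g X (I Y) := fun X Y => by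
    rw [← mI X (I Y), II, map_neg, neg_neg]
  have gJ : ∀ X Y, g (J X) Y = -g X (J Y) := fun X Y => by
    rw [← mJ X (J Y), JJ, map_neg, neg_neg]
  refine ⟨I, J, K, g, hI, hJ, hK, hg, ⟨II, JJ, ?_, ?_, ?_, ?_, ?_, ?_, ?_, sy, gI, gJ, ?_, on, sp⟩⟩
  all_goals intros
  all_goals simp only [IJ, ac', II, JJ, map_neg, neg_neg, gI, gJ]

theorem D_neg {n : ℕ} (M : AQH n C V) (X : V) (f : C) : M.D X (-f) = -M.D X f := by
  have h1 := M.D_add X f (-f)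
  have h0 := M.D_const X 0
  rw [map_zero] at h0
  rw [add_neg_cancel, h0] at h1
  linear_combination -h1

theorem nab2_skew {n : ℕ} (M : AQH n C V)
    (A : V → V) (hA : ∀ Y Z, M.omega A Y Z = -M.omega A Z Y) (X Y Z : V) :
    M.nab2 (M.omega A) X Y Z = -M.nab2 (M.omega A) X Z Y := by
  simp only [AQH.nab2]
  rw [hA Y Z, D_neg, hA (M.nab X Y) Z, hA Y (M.nab X Z)]
  ring

theorem nab2_omega {n : ℕ} (M : AQH n C V) (g : V →ₗ[C] V →ₗ[C] C) (hg : ∀ X Y, M.g X Y = g X Y)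
    (A : V → V) (X Y Z : V) :
    M.nab2 (M.omega A) X Y Z = g Y (M.nabA A X Z) := by
  simp only [AQH.nab2, AQH.omega, AQH.nabA, map_sub]
  rw [M.nab_metric]
  simp only [hg]
  ring

theorem main [Module ℝ V] [IsScalarTower ℝ C V] (M : AQH 2 C V)
    (nabq : V → V → V)
    (q1 : ∀ (f : C) X X' Y, nabq (f • X + X') Y = f • nabq X Y + nabq X' Y)
    (q2 : ∀ X Y Y', nabq X (Y + Y') = nabq X Y + nabq X Y')
    (q3 : ∀ X (f : C) Y, nabq X (f • Y) = f • nabq X Y + (M.D X f) • Y)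
    (q4 : ∀ X Y, nabq X Y - nabq Y X = M.bracket X Y)
    (γI γJ γK : V → C) (hq : M.QuatConn nabq γI γJ γK) : M.inKEH := by
  obtain ⟨I, J, K, g, hI, hJ, hK, hg, h⟩ := exists_QH M
  have q10 : ∀ Y, nabq 0 Y = 0 := fun Y => by
    have := q1 1 0 0 Y
    simpa using this
  let s : V →ₗ[C] V →ₗ[C] V →ₗ[C] C := mkTri (fun X Y Z => g (nabq X Y - M.nab X Y) Z)
    (by
      intro X X' Y Z
      have := q1 1 X X' Y
      rw [one_smul, one_smul] at this
      rw [this, M.nab_addX, add_sub_add_comm, map_add, LinearMap.add_apply])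
    (by
      intro f X Y Z
      have := q1 f X 0 Y
      rw [add_zero, q10, add_zero] at this
      rw [this, M.nab_smulX, ← smul_sub, map_smul, LinearMap.smul_apply, smul_eq_mul])
    (by
      intro X Y Y' Z
      rw [q2, M.nab_add, add_sub_add_comm, map_add, LinearMap.add_apply])
    (by
      intro f X Y Z
      rw [q3, M.nab_leibniz, add_sub_add_right_eq_sub, ← smul_sub, map_smul,
        LinearMap.smul_apply, smul_eq_mul])
    (by intros; rw [map_add])
    (by intros; rw [map_smul, smul_eq_mul])
  have sa : ∀ X Y Z, s X Y Z = g (nabq X Y - M.nab X Y) Z := fun _ _ _ => rfl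
  have hs : ∀ X Y Z, s X Y Z = s Y X Z := by
    intro X Y Z
    rw [sa, sa]
    have e1 := q4 X Y
    have e2 := M.torsion_free X Y
    have : nabq X Y - M.nab X Y = nabq Y X - M.nab Y X := by
      rw [← e2] at e1
      rw [sub_eq_sub_iff_add_eq_add] at e1 ⊢
      rw [e1, add_comm]
    rw [this]
  obtain ⟨qI, qJ, qK⟩ := hq
  -- covariant derivatives of the Kähler forms
  have gen : ∀ (A B D : V →ₗ[C] V) (b d : V → C) (_ : ∀ X Y, g (A X) Y = -g X (A Y))
      (_ : ∀ X Y, nabq X (A Y) - A (nabq X Y) = b X • B Y - d X • D Y) (X Y Z : V),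
      M.nab2 (M.omega A) X Y Z
        = b X * g Y (B Z) - d X * g Y (D Z) - s X (A Z) Y - s X Z (A Y) := by
    intro A B D b d hA hq X Y Z
    have e1 : M.nabA A X Z = (b X • B Z - d X • D Z) - (nabq X (A Z) - M.nab X (A Z))
        + A (nabq X Z - M.nab X Z) := by
      rw [← hq, AQH.nabA, map_sub]; abel
    rw [nab2_omega M g hg, e1, sa, sa, h.symm _ Y, h.symm _ (A Y), hA]
    simp only [map_add, map_sub, map_smul, smul_eq_mul]
    ring
  rw [hI, hJ, hK] at qI qJ qK
  have nI := gen I J K γK γJ h.gI qI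
  have nJ := gen J K I γI γK h.gJ qJ
  have nK := gen K I J γJ γI h.gK qK
  have sk : ∀ A : V →ₗ[C] V, (∀ X Y, g (A X) Y = -g X (A Y)) → ∀ X Y Z,
      M.nab2 (M.omega A) X Y Z = -M.nab2 (M.omega A) X Z Y := fun A hA =>
    nab2_skew M A (fun Y Z => by
      rw [AQH.omega, AQH.omega, hg, hg, h.symm Y, hA])
  have cc : ∀ A B : V →ₗ[C] V, (∀ X Y, g (A X) Y = -g X (A Y)) → ∀ Y Z, g Y (A Z) + g Z (A Y) = 0 :=
    fun A B hA Y Z => by rw [h.symm Z, hA]; ring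
  have zI := cc I I h.gI
  have zJ := cc J J h.gJ
  have zK := cc K K h.gK
  have cI : SymComm s I := by
    intro X Y Z
    have := sk I h.gI X Y Z
    rw [nI, nI] at this
    linear_combination γK X * zJ Y Z - γJ X * zK Y Z - this
  have cJ : SymComm s J := by
    intro X Y Z
    have := sk J h.gJ X Y Z
    rw [nJ, nJ] at this
    linear_combination γI X * zK Y Z - γK X * zI Y Z - this
  have cK : SymComm s K := by
    intro X Y Z
    have := sk K h.gK X Y Z
    rw [nK, nK] at this
    linear_combination γJ X * zI Y Z - γI X * zJ Y Z - this
  obtain ⟨k, hk, ktr, kf⟩ := core h s hs cI cJ cK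
  obtain ⟨k0, θ, h0, kd⟩ := decomp h hk ktr
  -- real scalars
  let u : C := algebraMap ℝ C (1 / 48)
  have hu : 48 * u = 1 := by
    rw [show (48 : C) = algebraMap ℝ C 48 from (map_ofNat _ 48).symm, ← map_mul]
    norm_num
  have sm : ∀ (r : ℝ) (m : ℤ) (x : C), r = m * (1 / 48) → r • x = m * u * x := by
    intro r m x hr
    rw [Algebra.smul_def, hr, map_mul, map_intCast]
  have smV : ∀ (r : ℝ) (Y v : V), g Y (r • v) = r • g Y v := by
    intro r Y v
    rw [← algebraMap_smul C r v, map_smul, smul_eq_mul, Algebra.smul_def]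
  -- the one-forms λ
  have lI : ∀ X, M.lambdaI X = γI X - 12 * u * ∑ i, s X (M.frame i) (I (M.frame i)) := by
    intro X
    have := lam_sum h s X (M.nab2 (M.omega J) X) _ _ (nJ X)
    simp only [AQH.lambdaI, AQH.inner2, hJ, hK]
    rw [smul_smul, sm _ 6 _ (by norm_num)]
    simp only [AQH.omega, hg] at this ⊢
    rw [this]; push_cast; linear_combination γI X * hu
  have lJ : ∀ X, M.lambdaJ X = γJ X - 12 * u * ∑ i, s X (M.frame i) (J (M.frame i)) := by
    intro X
    have := lam_sum h.cyc s X (M.nab2 (M.omega K) X) _ _ (nK X)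
    simp only [AQH.lambdaJ, AQH.inner2, hI, hK]
    rw [smul_smul, sm _ 6 _ (by norm_num)]
    simp only [AQH.omega, hg] at this ⊢
    rw [this]; push_cast; linear_combination γJ X * hu
  have lK : ∀ X, M.lambdaK X = γK X - 12 * u * ∑ i, s X (M.frame i) (K (M.frame i)) := by
    intro X
    have := lam_sum h.cyc.cyc s X (M.nab2 (M.omega I) X) _ _ (nI X)
    simp only [AQH.lambdaK, AQH.inner2, hI, hJ]
    rw [smul_smul, sm _ 6 _ (by norm_num)]
    simp only [AQH.omega, hg] at this ⊢
    rw [this]; push_cast; linear_combination γK X * hu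
  have xif : ∀ X Y Z, g Y (M.xi X Z) = -(6 * u * rho I J K k X Y Z) := by
    intro X Y Z
    have e1 := xi_sum h s X _ _ _ _ _ _ (nI X) (nJ X) (nK X) Y Z
    have e2 := kf X Y Z
    rw [nab2_omega M g hg, nab2_omega M g hg, nab2_omega M g hg, h.gI, h.gJ, h.gK] at e1
    simp only [AQH.xi, hI, hJ, hK, map_add, smV, map_smul, smul_eq_mul]
    rw [sm _ (-12) _ (by norm_num), sm _ 24 _ (by norm_num), lI, lJ, lK]
    push_cast
    linear_combination 12 * u * e1 + 6 * u * e2 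
      - 6 * u * ((∑ i, s X (M.frame i) (I (M.frame i))) * g Y (I Z)
        + (∑ i, s X (M.frame i) (J (M.frame i))) * g Y (J Z)
        + (∑ i, s X (M.frame i) (K (M.frame i))) * g Y (K Z)) * hu
  have lamz : ∀ A : V →ₗ[C] V, (∀ X Y, g (A X) Y = -g X (A Y)) →
      (∀ X, ∑ i, cy I J K k0 X (A (M.frame i)) (M.frame i) = 0) →
      M.Lam A (fun X Y Z => -u * cy I J K k0 X Y Z) = 0 := by
    intro A hA hz
    funext X
    have e1 : ∀ j, ∑ i, -u * cy I J K k0 X (M.frame i) (M.frame j) * g (M.frame i) (A (M.frame j))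
        = -u * cy I J K k0 X (A (M.frame j)) (M.frame j) := by
      intro j
      let φ : V →ₗ[C] C :=
        { toFun := fun Y => -u * cy I J K k0 X Y (M.frame j)
          map_add' := fun Y Y' => by
            simp only [cy, rho, map_add, LinearMap.add_apply]; ring
          map_smul' := fun f Y => by
            simp only [cy, rho, map_smul, LinearMap.smul_apply, smul_eq_mul, RingHom.id_apply]
            ring }
      have := sum_g h φ (A (M.frame j))
      have hφ : ∀ Y, φ Y = -u * cy I J K k0 X Y (M.frame j) := fun _ => rfl
      simp only [hφ] at this
      rw [← this]
      exact Finset.sum_congr rfl fun i _ => by rw [h.symm, mul_comm]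
    simp only [AQH.Lam, AQH.omega, hg]
    rw [Finset.sum_comm]
    simp only [e1, ← Finset.mul_sum, hz, mul_zero, smul_zero, Pi.zero_apply]
  refine ⟨fun X Y Z => -u * cy I J K k0 X Y Z, fun X => -(6 * u * θ X),
    ⟨⟨?_, ?_⟩, ?_, ?_, ?_, ?_, ?_, ?_, ?_⟩, ?_, ?_⟩
  · intro X Y Z; beta_reduce; rw [cy_alt h0.toHerm]; ring
  · intro X Y Z; beta_reduce; rw [cy_alt' h0.toHerm]; ring
  · intro f X X' Y Z
    simp only [cy, rho, map_add, map_smul, LinearMap.add_apply, LinearMap.smul_apply, smul_eq_mul]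
    ring
  · funext X Y Z
    have := cy_calL h h0.toHerm X Y Z
    simp only [AQH.calL, AQH.op12, AQH.op13, AQH.op23, hI]
    linear_combination -u * this
  · funext X Y Z
    have := cy_calL h.cyc h0.toHerm.cyc X Y Z
    simp only [cy_cyc] at this
    simp only [AQH.calL, AQH.op12, AQH.op13, AQH.op23, hJ]
    linear_combination -u * this
  · funext X Y Z
    have := cy_calL h.cyc.cyc h0.toHerm.cyc.cyc X Y Z
    simp only [cy_cyc] at this
    simp only [AQH.calL, AQH.op12, AQH.op13, AQH.op23, hK]
    linear_combination -u * this
  · rw [hI]; exact lamz I h.gI (cy_Lam h h0)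
  · rw [hJ]; exact lamz J h.gJ (fun X => by
      have := cy_Lam h.cyc h0.cyc X
      simpa only [cy_cyc] using this)
  · rw [hK]; exact lamz K h.gK (fun X => by
      have := cy_Lam h.cyc.cyc h0.cyc.cyc X
      simpa only [cy_cyc] using this)
  · intro f X X'
    simp only [map_add, map_smul, smul_eq_mul]; ring
  · intro X Y Z
    have e1 := cy_rho h h0 X Y Z
    have e2 := kE_rho h θ X Y Z
    have e3 : rho I J K k X Y Z = rho I J K k0 X Y Z + rho I J K (kE I J K g θ) X Y Z := by
      simp only [rho, kd]; ring
    rw [hg, xif, e3, e2]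
    have b0 := fun X Y Z a b => eh_sum' h LinearMap.id X Y Z a b
    simp only [LinearMap.id_apply] at b0
    simp only [AQH.xiKH3, AQH.xiEH3, AQH.op23, AQH.act1, AQH.omega, hI, hJ, hK, hg, b0,
      eh_sum' h I, eh_sum' h J, eh_sum' h K]
    rw [sm 3 144 _ (by norm_num), sm 3 144 _ (by norm_num), sm _ 48 _ (by norm_num)]
    push_cast
    linear_combination u * e1 + (3 * u * cy I J K k0 X Y Z
      + 18 * u * (g X Y * θ Z - g X Z * θ Y)
      + 6 * u * (θ (I X) * g Y (I Z) + θ (J X) * g Y (J Z) + θ (K X) * g Y (K Z))) * hu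

end QKT

open AQH in
/-- Any compatible metric on an eight-dimensional quaternionic
manifold is QKT: if the almost quaternionic structure admits a torsion-free
quaternionic connection `∇^q`, then for any compatible metric the intrinsic
torsion lies in `(K+E)H`.  Here `M : AQH 2 C V` packages the almost quaternionic
structure `I, J, K` together with a compatible metric (`4n = 8`, `n = 2`). -/
theorem statement15 {C V : Type*} [CommRing C] [Algebra ℝ C] [AddCommGroup V]
    [Module C V] [Module ℝ V] [IsScalarTower ℝ C V] (M : AQH 2 C V)
    (hquaternionic : ∃ nabq : V → V → V,
      -- `∇^q` is a connection ...
      (∀ (f : C) X X' Y, nabq (f • X + X') Y = f • nabq X Y + nabq X' Y) ∧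
      (∀ X Y Y', nabq X (Y + Y') = nabq X Y + nabq X Y') ∧
      (∀ X (f : C) Y, nabq X (f • Y) = f • nabq X Y + (M.D X f) • Y) ∧
      -- ... which is torsion-free ...
      (∀ X Y, nabq X Y - nabq Y X = M.bracket X Y) ∧
      -- ... and quaternionic
      (∃ γI γJ γK : V → C, M.QuatConn nabq γI γJ γK)) :
    M.inKEH := by
  obtain ⟨nabq, q1, q2, q3, q4, γI, γJ, γK, hq⟩ := hquaternionic
  exact QKT.main M nabq q1 q2 q3 q4 γI γJ γK hq
end
end
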